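/- arXiv:1802.01510 — 4 statements merged into one kernel-verified Lean document; each statement's English description precedes it below -/
import Mathlib

section
/- Any minimizer E of the relative fractional perimeter P_s(·, ℝ^N_+) among subsets of the closed half-ball B_R^+ = B_R ∩ ℝ^N_+ with |E| = 1, taken closed, must intersect the hyperplane {x_N = 0}. -/
open MeasureTheory ENNReal

/-- Relative fractional `s`-perimeter of `E` in `Ω` (ambient dimension `N+1`). -/
noncomputable def relPerimeter (N : ℕ) (s : ℝ)
    (E Ω : Set (EuclideanSpace ℝ (Fin (N+1)))) : ℝ≥0∞ :=
  ∫⁻ x in E, ∫⁻ y in Ω \ E, ENNReal.ofReal (‖x - y‖ ^ (-((N + 1 : ℝ) + 2*s)))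

open scoped Pointwise

/-- The tail integral of `‖z‖ ^ (-(n + 2s))` outside a ball of radius `δ` is `O(δ ^ (-2s))`. -/
lemma exists_lintegral_norm_rpow_tail_le (N : ℕ) {s : ℝ} (hs : 0 < s) :
    ∃ C : ℝ, ∀ δ : ℝ, 0 < δ →
      ∫⁻ z in {z : EuclideanSpace ℝ (Fin (N+1)) | δ < ‖z‖},
        ENNReal.ofReal (‖z‖ ^ (-((N + 1 : ℝ) + 2*s))) ≤ ENNReal.ofReal (C * δ ^ (-(2*s))) := by
  refine ⟨(N + 1) * volume.real (Metric.ball (0 : EuclideanSpace ℝ (Fin (N+1))) 1) / (2 * s),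
    fun δ hδ => ?_⟩
  set p : ℝ := -((N + 1 : ℝ) + 2*s) with hp
  set f : ℝ → ℝ := (Set.Ioi δ).indicator (fun t => t ^ p) with hf
  have hdim : Module.finrank ℝ (EuclideanSpace ℝ (Fin (N+1))) = N + 1 := by simp
  have hradial : Set.EqOn (fun y : ℝ => y ^ N • f y)
      ((Set.Ioi δ).indicator (fun t => t ^ (-1 - 2*s))) (Set.Ioi 0) := by
    intro y (hy : 0 < y)
    by_cases hyδ : y ∈ Set.Ioi δ
    · simp only [hf, Set.indicator_of_mem hyδ, smul_eq_mul]
      rw [← Real.rpow_natCast, ← Real.rpow_add hy]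
      congr 1
      rw [hp]; ring
    · simp [hf, Set.indicator_of_notMem hyδ]
  have hinter : Set.Ioi δ ∩ Set.Ioi 0 = Set.Ioi δ :=
    Set.inter_eq_left.mpr (Set.Ioi_subset_Ioi hδ.le)
  have hint : Integrable (fun z : EuclideanSpace ℝ (Fin (N+1)) => f ‖z‖) := by
    rw [integrable_fun_norm_addHaar, hdim, Nat.add_sub_cancel,
      integrableOn_congr_fun hradial measurableSet_Ioi, IntegrableOn,
      integrable_indicator_iff measurableSet_Ioi, IntegrableOn,
      Measure.restrict_restrict measurableSet_Ioi, hinter]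
    exact integrableOn_Ioi_rpow_of_lt (by linarith) hδ
  have hf0 : ∀ t, 0 ≤ f t := fun t =>
    Set.indicator_nonneg (fun x (hx : δ < x) => Real.rpow_nonneg (hδ.trans hx).le _) t
  have hmeas : MeasurableSet {z : EuclideanSpace ℝ (Fin (N+1)) | δ < ‖z‖} :=
    measurableSet_lt measurable_const measurable_norm
  apply le_of_eq
  calc _ = ∫⁻ z : EuclideanSpace ℝ (Fin (N+1)), ENNReal.ofReal (f ‖z‖) := by
        rw [← lintegral_indicator hmeas]
        refine lintegral_congr fun z => ?_
        by_cases hz : δ < ‖z‖ <;> simp [hf, Set.indicator, hz]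
    _ = ENNReal.ofReal (∫ z : EuclideanSpace ℝ (Fin (N+1)), f ‖z‖) :=
        (ofReal_integral_eq_lintegral_ofReal hint (Filter.Eventually.of_forall fun z => hf0 _)).symm
    _ = _ := by
        rw [integral_fun_norm_addHaar, hdim, Nat.add_sub_cancel,
          setIntegral_congr_fun measurableSet_Ioi hradial, integral_indicator measurableSet_Ioi,
          Measure.restrict_restrict measurableSet_Ioi, hinter,
          integral_Ioi_rpow_of_lt (by linarith) hδ]
        congr 1
        have : -1 - 2*s + 1 = -(2*s) := by ring
        rw [this, nsmul_eq_mul, smul_eq_mul, neg_div_neg_eq]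
        push_cast
        ring

/-- The function `(r - ‖x‖) ^ (-2s)` has finite integral over the ball of radius `r`. -/
lemma lintegral_ball_rpow_sub_norm_lt_top (N : ℕ) {s r : ℝ} (hs' : s < 1/2) (hr : 0 < r) :
    ∫⁻ x in Metric.ball (0 : EuclideanSpace ℝ (Fin (N+1))) r,
      ENNReal.ofReal ((r - ‖x‖) ^ (-(2*s))) < ∞ := by
  have hline : IntegrableOn (fun y : ℝ => (r - y) ^ (-(2*s))) (Set.Ioo 0 r) := by
    have h := (intervalIntegral.intervalIntegrable_rpow' (a := 0) (b := r)
      (r := -(2*s)) (by linarith)).comp_sub_left r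
    simp only [sub_zero, sub_self] at h
    exact ((intervalIntegrable_iff_integrableOn_Ioc_of_le hr.le).mp h.symm).mono_set
      Set.Ioo_subset_Ioc_self
  have hball : IntegrableOn (fun x : EuclideanSpace ℝ (Fin (N+1)) => (r - ‖x‖) ^ (-(2*s)))
      (Metric.ball 0 r) := by
    rw [integrableOn_fun_norm_addHaar volume (f := fun t => (r - t) ^ (-(2*s)))]
    have hdim : Module.finrank ℝ (EuclideanSpace ℝ (Fin (N+1))) = N + 1 := by simp
    rw [hdim, Nat.add_sub_cancel]
    refine Integrable.bdd_mul (c := r ^ N) hline (by fun_prop) ?_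
    refine ae_restrict_of_forall_mem measurableSet_Ioo fun y hy => ?_
    rw [Real.norm_of_nonneg (pow_nonneg hy.1.le _)]
    exact pow_le_pow_left₀ hy.1.le hy.2.le _
  exact lt_of_le_of_lt (lintegral_ofReal_le_lintegral_enorm _) hball.hasFiniteIntegral

/-- The intersection of a closed ball with a half-space has finite fractional perimeter
relative to the open half-space when `s < 1/2`. -/
lemma relPerimeter_halfBall_lt_top (N : ℕ) {s r : ℝ} (hs : 0 < s) (hs' : s < 1/2) (hr : 0 < r) :
    relPerimeter N s (Metric.closedBall 0 r ∩ {x | 0 ≤ x (Fin.last N)})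
      {x | 0 < x (Fin.last N)} < ∞ := by
  obtain ⟨C, hC⟩ := exists_lintegral_norm_rpow_tail_le N hs
  have hball : Metric.closedBall (0 : EuclideanSpace ℝ (Fin (N+1))) r =ᵐ[volume]
      Metric.ball 0 r := by
    refine (ae_eq_of_subset_of_measure_ge Metric.ball_subset_closedBall
      (Measure.addHaar_closedBall_eq_addHaar_ball _ _ _).le
      measurableSet_ball.nullMeasurableSet measure_closedBall_lt_top.ne).symm
  have hinner : ∀ x ∈ Metric.ball (0 : EuclideanSpace ℝ (Fin (N+1))) r,
      ∫⁻ y in {x | 0 < x (Fin.last N)} \ (Metric.closedBall 0 r ∩ {x | 0 ≤ x (Fin.last N)}),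
        ENNReal.ofReal (‖x - y‖ ^ (-((N + 1 : ℝ) + 2*s))) ≤
      ENNReal.ofReal C * ENNReal.ofReal ((r - ‖x‖) ^ (-(2*s))) := by
    intro x hx
    rw [mem_ball_zero_iff] at hx
    have hsub : {x : EuclideanSpace ℝ (Fin (N+1)) | 0 < x (Fin.last N)} \
        (Metric.closedBall 0 r ∩ {x | 0 ≤ x (Fin.last N)}) ⊆
        (fun y => x - y) ⁻¹' {z | r - ‖x‖ < ‖z‖} := by
      rintro y ⟨hy0, hy⟩
      have hyr : r < ‖y‖ := by
        by_contra! h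
        exact hy ⟨mem_closedBall_zero_iff.mpr h, le_of_lt (show 0 < y (Fin.last N) from hy0)⟩
      have := norm_sub_norm_le y x
      rw [norm_sub_rev] at this
      show r - ‖x‖ < ‖x - y‖
      linarith
    calc _ ≤ ∫⁻ y in (fun y => x - y) ⁻¹' {z | r - ‖x‖ < ‖z‖},
          ENNReal.ofReal (‖x - y‖ ^ (-((N + 1 : ℝ) + 2*s))) := lintegral_mono_set hsub
      _ = ∫⁻ z in {z : EuclideanSpace ℝ (Fin (N+1)) | r - ‖x‖ < ‖z‖},
          ENNReal.ofReal (‖z‖ ^ (-((N + 1 : ℝ) + 2*s))) :=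
        (Measure.measurePreserving_sub_left volume x).setLIntegral_comp_preimage_emb
          (MeasurableEquiv.subLeft x).measurableEmbedding
          (fun z => ENNReal.ofReal (‖z‖ ^ (-((N + 1 : ℝ) + 2*s)))) _
      _ ≤ ENNReal.ofReal (C * (r - ‖x‖) ^ (-(2*s))) := hC _ (by linarith)
      _ = _ := ENNReal.ofReal_mul' (Real.rpow_nonneg (by linarith) _)
  calc _ ≤ ∫⁻ x in Metric.closedBall (0 : EuclideanSpace ℝ (Fin (N+1))) r, ∫⁻ y in
        {x | 0 < x (Fin.last N)} \ (Metric.closedBall 0 r ∩ {x | 0 ≤ x (Fin.last N)}),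
          ENNReal.ofReal (‖x - y‖ ^ (-((N + 1 : ℝ) + 2*s))) :=
        lintegral_mono_set Set.inter_subset_left
    _ = ∫⁻ x in Metric.ball (0 : EuclideanSpace ℝ (Fin (N+1))) r, ∫⁻ y in
        {x | 0 < x (Fin.last N)} \ (Metric.closedBall 0 r ∩ {x | 0 ≤ x (Fin.last N)}),
          ENNReal.ofReal (‖x - y‖ ^ (-((N + 1 : ℝ) + 2*s))) := setLIntegral_congr hball
    _ ≤ ∫⁻ x in Metric.ball (0 : EuclideanSpace ℝ (Fin (N+1))) r,
          ENNReal.ofReal C * ENNReal.ofReal ((r - ‖x‖) ^ (-(2*s))) :=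
        setLIntegral_mono' measurableSet_ball hinner
    _ < ∞ := by
        rw [lintegral_const_mul' _ _ ENNReal.ofReal_ne_top]
        exact ENNReal.mul_lt_top ENNReal.ofReal_lt_top
          (lintegral_ball_rpow_sub_norm_lt_top N hs' hr)

lemma isClosed_halfBall (N : ℕ) (r : ℝ) :
    IsClosed (Metric.closedBall (0 : EuclideanSpace ℝ (Fin (N+1))) r ∩
      {x | 0 ≤ x (Fin.last N)}) :=
  Metric.isClosed_closedBall.inter (isClosed_le continuous_const (by fun_prop))

/-- A half-ball of volume at least `1` contains a concentric half-ball of volume exactly `1`. -/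
lemma exists_halfBall_volume_eq_one (N : ℕ) {R : ℝ} (hR : 0 < R)
    (hvol : 1 ≤ volume (Metric.closedBall (0 : EuclideanSpace ℝ (Fin (N+1))) R ∩
      {x | 0 ≤ x (Fin.last N)})) :
    ∃ r, 0 < r ∧ r ≤ R ∧ volume (Metric.closedBall (0 : EuclideanSpace ℝ (Fin (N+1))) r ∩
      {x | 0 ≤ x (Fin.last N)}) = 1 := by
  set H := Metric.closedBall (0 : EuclideanSpace ℝ (Fin (N+1))) R ∩ {x | 0 ≤ x (Fin.last N)}
    with hH
  have hfin : volume H ≠ ∞ :=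
    ((measure_mono Set.inter_subset_left).trans_lt measure_closedBall_lt_top).ne
  set V := (volume H).toReal with hV
  have hV1 : 1 ≤ V := by
    simpa using ENNReal.toReal_mono hfin hvol
  set t : ℝ := (V⁻¹) ^ (((N + 1 : ℕ) : ℝ)⁻¹) with ht
  have ht0 : 0 < t := Real.rpow_pos_of_pos (by positivity) _
  have ht1 : t ≤ 1 :=
    Real.rpow_le_one (by positivity) (inv_le_one_of_one_le₀ hV1) (by positivity)
  have htpow : t ^ (N + 1) = V⁻¹ := Real.rpow_inv_natCast_pow (by positivity) (by simp)
  refine ⟨t * R, by positivity, by nlinarith, ?_⟩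
  have hscale : Metric.closedBall (0 : EuclideanSpace ℝ (Fin (N+1))) (t * R) ∩
      {x | 0 ≤ x (Fin.last N)} = t • H := by
    ext x
    rw [Set.mem_smul_set_iff_inv_smul_mem₀ ht0.ne']
    simp only [hH, Set.mem_inter_iff, mem_closedBall_zero_iff, Set.mem_ofPred_eq, norm_smul,
      norm_inv, Real.norm_of_nonneg ht0.le, PiLp.smul_apply, smul_eq_mul]
    rw [inv_mul_le_iff₀ ht0, mul_nonneg_iff_of_pos_left (inv_pos.mpr ht0)]
  rw [hscale, Measure.addHaar_smul, finrank_euclideanSpace_fin, htpow, abs_of_pos (by positivity),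
    ← ENNReal.ofReal_toReal hfin, ← hV, ← ENNReal.ofReal_mul (by positivity),
    inv_mul_cancel₀ (by positivity), ENNReal.ofReal_one]

/-- Translating both sets leaves the relative perimeter unchanged. -/
lemma relPerimeter_preimage_add_right (N : ℕ) (s : ℝ)
    (E Ω : Set (EuclideanSpace ℝ (Fin (N+1)))) (v : EuclideanSpace ℝ (Fin (N+1))) :
    relPerimeter N s ((· + v) ⁻¹' E) ((· + v) ⁻¹' Ω) = relPerimeter N s E Ω := by
  have hpres := measurePreserving_add_right (volume : Measure (EuclideanSpace ℝ (Fin (N+1)))) v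
  have hemb : MeasurableEmbedding (fun x : EuclideanSpace ℝ (Fin (N+1)) => x + v) :=
    measurableEmbedding_addRight v
  unfold relPerimeter
  rw [← hpres.setLIntegral_comp_preimage_emb hemb _ E]
  refine lintegral_congr fun x => ?_
  rw [← hpres.setLIntegral_comp_preimage_emb hemb _ (Ω \ E), Set.preimage_sdiff]
  simp

/-- For a bounded set lying above height `a > 0`, the perimeter relative to `{0 < x_N}` strictly
exceeds the perimeter relative to `{a < x_N}`. -/
lemma relPerimeter_lt_of_le_height (N : ℕ) {s R a : ℝ} (hs : 0 < s) (hR : 0 < R) (ha : 0 < a)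
    {E : Set (EuclideanSpace ℝ (Fin (N+1)))} (hE : MeasurableSet E)
    (hER : E ⊆ Metric.closedBall 0 R) (hEa : ∀ x ∈ E, a ≤ x (Fin.last N)) (hvol : volume E ≠ 0)
    (hfin : relPerimeter N s E {x | a < x (Fin.last N)} ≠ ∞) :
    relPerimeter N s E {x | a < x (Fin.last N)} <
      relPerimeter N s E {x | 0 < x (Fin.last N)} := by
  set T : Set (EuclideanSpace ℝ (Fin (N+1))) :=
    {x | 0 < x (Fin.last N) ∧ x (Fin.last N) < a} ∩ Metric.ball 0 R with hT
  have hcoord : Continuous fun x : EuclideanSpace ℝ (Fin (N+1)) => x (Fin.last N) := by fun_prop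
  have hTopen : IsOpen T :=
    ((isOpen_lt continuous_const hcoord).and (isOpen_lt hcoord continuous_const)).inter
      Metric.isOpen_ball
  have hTpos : 0 < volume T := by
    refine hTopen.measure_pos _ ⟨EuclideanSpace.single (Fin.last N) (min a R / 2), ?_⟩
    have h0 : 0 < min a R := lt_min ha hR
    have h1 := min_le_left a R
    have h2 := min_le_right a R
    refine ⟨⟨?_, ?_⟩, ?_⟩
    · simpa using ⟨ha, hR⟩
    · simp only [PiLp.single_apply, if_true]
      linarith
    · rw [mem_ball_zero_iff, PiLp.norm_single, Real.norm_of_nonneg (by positivity)]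
      linarith
  set c : ℝ≥0∞ := ENNReal.ofReal ((2 * R) ^ (-((N + 1 : ℝ) + 2*s))) with hc
  have hcpos : 0 < c := ENNReal.ofReal_pos.mpr (Real.rpow_pos_of_pos (by positivity) _)
  have hkernel : ∀ x ∈ E, ∀ y ∈ T,
      c ≤ ENNReal.ofReal (‖x - y‖ ^ (-((N + 1 : ℝ) + 2*s))) := by
    rintro x hx y ⟨⟨-, hya⟩, hyR⟩
    refine ENNReal.ofReal_le_ofReal (Real.rpow_le_rpow_of_nonpos ?_ ?_ ?_)
    · refine norm_pos_iff.mpr (sub_ne_zero.mpr ?_)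
      rintro rfl
      exact absurd (hEa _ hx) (not_le.mpr hya)
    · have h1 := norm_sub_le x y
      have h2 := mem_closedBall_zero_iff.mp (hER hx)
      have h3 := mem_ball_zero_iff.mp hyR
      linarith
    · have : (0 : ℝ) ≤ N := N.cast_nonneg
      linarith
  have hsplit : ∀ x ∈ E,
      (∫⁻ y in {x | a < x (Fin.last N)} \ E,
        ENNReal.ofReal (‖x - y‖ ^ (-((N + 1 : ℝ) + 2*s)))) + c * volume T ≤
      ∫⁻ y in {x | 0 < x (Fin.last N)} \ E,
        ENNReal.ofReal (‖x - y‖ ^ (-((N + 1 : ℝ) + 2*s))) := by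
    intro x hx
    have hdisj : Disjoint ({x | a < x (Fin.last N)} \ E) T := by
      rw [Set.disjoint_left]
      rintro y ⟨hy, -⟩ ⟨⟨-, hya⟩, -⟩
      exact lt_asymm hy hya
    have hsub : ({x | a < x (Fin.last N)} \ E) ∪ T ⊆ {x | 0 < x (Fin.last N)} \ E := by
      rintro y (⟨hy, hyE⟩ | ⟨⟨hy0, hya⟩, -⟩)
      · exact ⟨ha.trans hy, hyE⟩
      · exact ⟨hy0, fun hyE => absurd (hEa _ hyE) (not_le.mpr hya)⟩
    refine le_trans ?_ (lintegral_mono_set hsub)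
    rw [lintegral_union hTopen.measurableSet hdisj]
    gcongr
    rw [← setLIntegral_const]
    exact setLIntegral_mono' hTopen.measurableSet (hkernel x hx)
  calc _ < relPerimeter N s E {x | a < x (Fin.last N)} + c * volume T * volume E :=
        ENNReal.lt_add_right hfin (mul_ne_zero (mul_ne_zero hcpos.ne' hTpos.ne') hvol)
    _ ≤ _ := by
        rw [relPerimeter, ← setLIntegral_const, ← lintegral_add_right _ measurable_const]
        exact setLIntegral_mono' hE hsplit

/-- any closed minimizer `E` of the fractional perimeter relative to the
half-space `{x_N > 0}`, among closed subsets of the (closed) half-ball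
`B_R ∩ {x_N ≥ 0}` of volume `1`, must intersect the hyperplane `{x_N = 0}`. -/
theorem minimizer_touches_hyperplane
    (N : ℕ) (s R : ℝ) (hs : 0 < s) (hs' : s < 1/2) (hR : 0 < R)
    (E : Set (EuclideanSpace ℝ (Fin (N+1)))) (hEclosed : IsClosed E)
    (hEsub : E ⊆ Metric.closedBall 0 R ∩ {x | 0 ≤ x (Fin.last N)})
    (hEvol : volume E = 1)
    (hmin : ∀ F : Set (EuclideanSpace ℝ (Fin (N+1))), IsClosed F →
      F ⊆ Metric.closedBall 0 R ∩ {x | 0 ≤ x (Fin.last N)} → volume F = 1 →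
      relPerimeter N s E {x | 0 < x (Fin.last N)} ≤
        relPerimeter N s F {x | 0 < x (Fin.last N)}) :
    ∃ x ∈ E, x (Fin.last N) = 0 := by
  have hfin : relPerimeter N s E {x | 0 < x (Fin.last N)} < ∞ := by
    obtain ⟨r, hr, hrR, hvol⟩ :=
      exists_halfBall_volume_eq_one N hR (hEvol ▸ measure_mono hEsub)
    exact (hmin _ (isClosed_halfBall N r)
      (Set.inter_subset_inter_left _ (Metric.closedBall_subset_closedBall hrR)) hvol).trans_lt
      (relPerimeter_halfBall_lt_top N hs hs' hr)
  have hEne : E.Nonempty := nonempty_of_measure_ne_zero (by rw [hEvol]; exact one_ne_zero)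
  have hEcompact : IsCompact E :=
    (isCompact_closedBall _ R).of_isClosed_subset hEclosed (hEsub.trans Set.inter_subset_left)
  obtain ⟨x₀, hx₀, hx₀min⟩ := hEcompact.exists_isMinOn hEne
    (f := fun x : EuclideanSpace ℝ (Fin (N+1)) => x (Fin.last N)) (by fun_prop)
  refine ⟨x₀, hx₀, ?_⟩
  by_contra hne
  set a := x₀ (Fin.last N) with ha_def
  have ha : 0 < a := lt_of_le_of_ne (hEsub hx₀).2 (Ne.symm hne)
  have hEa : ∀ x ∈ E, a ≤ x (Fin.last N) := fun x hx => hx₀min hx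
  set v : EuclideanSpace ℝ (Fin (N+1)) := EuclideanSpace.single (Fin.last N) a with hv
  have hFsub : (· + v) ⁻¹' E ⊆ Metric.closedBall 0 R ∩ {x | 0 ≤ x (Fin.last N)} := by
    intro x (hx : x + v ∈ E)
    have hxa : 0 ≤ x (Fin.last N) := by
      have := hEa _ hx
      simp only [PiLp.add_apply, hv, PiLp.single_apply, if_true] at this
      linarith
    refine ⟨mem_closedBall_zero_iff.mpr ?_, hxa⟩
    have hxv : ‖x + v‖ ≤ R := mem_closedBall_zero_iff.mp (hEsub hx).1
    have hsq : ‖x‖ ^ 2 ≤ ‖x + v‖ ^ 2 := by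
      rw [norm_add_sq_real]
      have : inner ℝ x v = a * x (Fin.last N) := by
        simp [hv, EuclideanSpace.inner_single_right]
      have := mul_nonneg ha.le hxa
      nlinarith [sq_nonneg ‖v‖]
    exact (le_of_sq_le_sq hsq (norm_nonneg _)).trans hxv
  have htrans : relPerimeter N s ((· + v) ⁻¹' E) {x | 0 < x (Fin.last N)} =
      relPerimeter N s E {x | a < x (Fin.last N)} := by
    rw [← relPerimeter_preimage_add_right N s E _ v]
    congr 1
    ext x
    simp [hv]
  have hle : relPerimeter N s E {x | 0 < x (Fin.last N)} ≤
      relPerimeter N s E {x | a < x (Fin.last N)} := by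
    rw [← htrans]
    exact hmin _ (hEclosed.preimage (by fun_prop)) hFsub
      (by rw [measure_preimage_add_right, hEvol])
  have hmono : relPerimeter N s E {x | a < x (Fin.last N)} ≤
      relPerimeter N s E {x | 0 < x (Fin.last N)} :=
    lintegral_mono fun x => lintegral_mono_set
      (Set.sdiff_subset_sdiff_left fun y (hy : a < _) => ha.trans hy)
  exact (relPerimeter_lt_of_le_height N hs hR ha hEclosed.measurableSet
    (hEsub.trans Set.inter_subset_left) hEa (by rw [hEvol]; exact one_ne_zero)
    (hmono.trans_lt hfin).ne).not_ge hle
end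

section
/- The potential V_{B_1}(x) = ∫_{B_1^c} |x−y|^{−(N+2s)} dy of the unit ball is a radial function of x ∈ B_1, is strictly increasing in |x| on (0,1), and has the origin as its unique critical point, which is a non-degenerate global minimum. -/
open MeasureTheory

/-- The nonlocal potential of the unit ball:
`V_{B_1}(x) = ∫_{B_1ᶜ} |x-y|^{-(N+2s)} dy`. -/
noncomputable def ballPotential (N : ℕ) (s : ℝ) (x : EuclideanSpace ℝ (Fin N)) : ℝ :=
  ∫ y in (Metric.ball (0 : EuclideanSpace ℝ (Fin N)) 1)ᶜ, ‖x - y‖ ^ (-((N : ℝ) + 2*s))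

open Module Metric

/-- A family of continuous linear maps on a finite-dimensional space is differentiable if all its
applications are. -/
theorem differentiableAt_of_forall_clm_apply {𝕜 D E F : Type*} [NontriviallyNormedField 𝕜]
    [CompleteSpace 𝕜] [NormedAddCommGroup D] [NormedSpace 𝕜 D] [NormedAddCommGroup E]
    [NormedSpace 𝕜 E] [FiniteDimensional 𝕜 E] [NormedAddCommGroup F] [NormedSpace 𝕜 F]
    {f : D → E →L[𝕜] F} {x : D} (h : ∀ y, DifferentiableAt 𝕜 (fun z ↦ f z y) x) :
    DifferentiableAt 𝕜 f x := by
  let e₁ := ContinuousLinearEquiv.ofFinrankEq (finrank_fin_fun 𝕜 (n := finrank 𝕜 E)).symm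
  let e₂ := (e₁.arrowCongr (1 : F ≃L[𝕜] F)).trans (ContinuousLinearEquiv.piRing _)
  rw [← Function.id_comp f, ← e₂.symm_comp_self]
  exact e₂.symm.differentiableAt.comp x (differentiableAt_pi.2 fun i ↦ h _)

section Kernel

variable {E : Type*} [NormedAddCommGroup E]

theorem continuousOn_norm_rpow (r : ℝ) : ContinuousOn (fun u : E ↦ ‖u‖ ^ r) {0}ᶜ :=
  continuous_norm.continuousOn.rpow_const fun _ hu ↦ Or.inl (norm_ne_zero_iff.2 hu)

variable [InnerProductSpace ℝ E]

/-- The gradient of `‖u‖ ^ r`, as a linear form. -/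
noncomputable def normRpowFDeriv (r : ℝ) (u : E) : E →L[ℝ] ℝ :=
  (r * ‖u‖ ^ (r - 2)) • innerSL ℝ u

/-- The Hessian of `‖u‖ ^ r` with one argument fixed to `v`, as a linear form. -/
noncomputable def normRpowHessian (r : ℝ) (v u : E) : E →L[ℝ] ℝ :=
  (r * ‖u‖ ^ (r - 2)) • innerSL ℝ v + (r * ((r - 2) * ‖u‖ ^ (r - 4)) * inner ℝ u v) • innerSL ℝ u

theorem normRpowFDeriv_apply (r : ℝ) (u v : E) :
    normRpowFDeriv r u v = r * ‖u‖ ^ (r - 2) * inner ℝ u v := by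
  simp [normRpowFDeriv]

theorem normRpowHessian_apply (r : ℝ) (v u w : E) :
    normRpowHessian r v u w = r * ‖u‖ ^ (r - 2) * inner ℝ v w +
      r * ((r - 2) * ‖u‖ ^ (r - 4)) * inner ℝ u v * inner ℝ u w := by
  simp [normRpowHessian]

theorem hasFDerivAt_norm_rpow_of_ne_zero (r : ℝ) {u : E} (hu : u ≠ 0) :
    HasFDerivAt (fun z : E ↦ ‖z‖ ^ r) (normRpowFDeriv r u) u := by
  have h := (hasStrictFDerivAt_norm_sq u).hasFDerivAt.rpow_const (p := r / 2)
    (Or.inl (by positivity))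
  have e : ∀ z : E, ∀ t : ℝ, (‖z‖ ^ 2) ^ (t / 2) = ‖z‖ ^ t := fun z t ↦ by
    rw [← Real.rpow_natCast, ← Real.rpow_mul (norm_nonneg z)]
    congr 1; push_cast; ring
  rw [show r / 2 - 1 = (r - 2) / 2 by ring] at h
  simp only [e] at h
  convert h using 1
  ext v
  simp [normRpowFDeriv]
  ring

theorem hasFDerivAt_normRpowFDeriv_apply (r : ℝ) (v : E) {u : E} (hu : u ≠ 0) :
    HasFDerivAt (fun z ↦ normRpowFDeriv r z v) (normRpowHessian r v u) u := by
  simp only [normRpowFDeriv_apply]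
  have h := ((hasFDerivAt_norm_rpow_of_ne_zero (r - 2) hu).const_mul r).mul
    ((hasFDerivAt_id u).inner ℝ (hasFDerivAt_const v u))
  refine h.congr_fderiv ?_
  ext w
  simp [normRpowHessian_apply, normRpowFDeriv_apply, real_inner_comm,
    show r - 2 - 2 = r - 4 by ring]
  ring

theorem continuousOn_normRpowFDeriv (r : ℝ) : ContinuousOn (normRpowFDeriv (E := E) r) {0}ᶜ := by
  have h := continuousOn_norm_rpow (E := E) (r - 2)
  have h' := (innerSL ℝ (E := E)).continuous.continuousOn (s := {0}ᶜ)
  exact (continuousOn_const.mul h).smul h'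

theorem continuousOn_normRpowHessian (r : ℝ) (v : E) :
    ContinuousOn (normRpowHessian r v) {0}ᶜ := by
  have h₁ := continuousOn_norm_rpow (E := E) (r - 2)
  have h₂ := continuousOn_norm_rpow (E := E) (r - 4)
  have h₃ := (innerSL ℝ (E := E)).continuous.continuousOn (s := {0}ᶜ)
  have h₄ : ContinuousOn (fun u : E ↦ inner ℝ u v) {0}ᶜ := by fun_prop
  exact ((continuousOn_const.mul h₁).smul continuousOn_const).add
    (((continuousOn_const.mul (continuousOn_const.mul h₂)).mul h₄).smul h₃)

theorem norm_normRpowFDeriv_le (r : ℝ) {u : E} (hu : u ≠ 0) :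
    ‖normRpowFDeriv r u‖ ≤ |r| * ‖u‖ ^ (r - 1) := by
  have hu' : 0 < ‖u‖ := norm_pos_iff.2 hu
  rw [normRpowFDeriv, norm_smul, innerSL_apply_norm, norm_mul, Real.norm_eq_abs,
    Real.norm_eq_abs, abs_of_nonneg (by positivity : 0 ≤ ‖u‖ ^ (r - 2)), mul_assoc,
    ← Real.rpow_add_one hu'.ne', show r - 2 + 1 = r - 1 by ring]

theorem norm_normRpowFDeriv_apply_le (r : ℝ) (v : E) {u : E} (hu : u ≠ 0) :
    ‖normRpowFDeriv r u v‖ ≤ |r| * ‖v‖ * ‖u‖ ^ (r - 1) := by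
  have h := (normRpowFDeriv r u).le_of_opNorm_le (norm_normRpowFDeriv_le r hu) v
  rwa [mul_right_comm] at h

theorem norm_normRpowHessian_le (r : ℝ) (v : E) {u : E} (hu : u ≠ 0) :
    ‖normRpowHessian r v u‖ ≤ (|r| + |r| * |r - 2|) * ‖v‖ * ‖u‖ ^ (r - 2) := by
  have hu' : 0 < ‖u‖ := norm_pos_iff.2 hu
  have e : ‖u‖ ^ (r - 4) * (‖u‖ * ‖u‖) = ‖u‖ ^ (r - 2) := by
    rw [← mul_assoc, ← Real.rpow_add_one hu'.ne', ← Real.rpow_add_one hu'.ne']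
    congr 1; ring
  rw [normRpowHessian]
  refine (norm_add_le _ _).trans ?_
  rw [norm_smul, norm_smul, innerSL_apply_norm, innerSL_apply_norm, norm_mul, norm_mul, norm_mul,
    norm_mul]
  simp only [Real.norm_eq_abs, abs_of_nonneg (Real.rpow_nonneg hu'.le _)]
  calc |r| * ‖u‖ ^ (r - 2) * ‖v‖ + |r| * (|r - 2| * ‖u‖ ^ (r - 4)) * |inner ℝ u v| * ‖u‖
      ≤ |r| * ‖u‖ ^ (r - 2) * ‖v‖ + |r| * (|r - 2| * ‖u‖ ^ (r - 4)) * (‖u‖ * ‖v‖) * ‖u‖ := by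
        gcongr
        exact abs_real_inner_le_norm u v
    _ = |r| * ‖u‖ ^ (r - 2) * ‖v‖ + |r| * |r - 2| * ‖v‖ * (‖u‖ ^ (r - 4) * (‖u‖ * ‖u‖)) := by ring
    _ = _ := by rw [e]; ring

end Kernel

section BallCompl

variable {E : Type*} [NormedAddCommGroup E]

theorem sub_ne_zero_of_mem_ball_compl {x y : E} (hx : x ∈ ball (0 : E) 1)
    (hy : y ∈ (ball (0 : E) 1)ᶜ) : x - y ≠ 0 :=
  sub_ne_zero.2 fun h ↦ hy (h ▸ hx)

theorem norm_sub_rpow_neg_le {ρ q : ℝ} (hρ : ρ < 1) (hq : 0 ≤ q) {x y : E} (hx : ‖x‖ ≤ ρ)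
    (hy : y ∈ (ball (0 : E) 1)ᶜ) :
    ‖x - y‖ ^ (-q) ≤ ((1 - ρ) / 2) ^ (-q) * (1 + ‖y‖) ^ (-q) := by
  have hy' : 1 ≤ ‖y‖ := by simpa using hy
  have h1 : ‖y‖ - ‖x‖ ≤ ‖x - y‖ := by
    rw [norm_sub_rev]; exact norm_sub_norm_le y x
  have hx0 := norm_nonneg x
  have h2 : (1 - ρ) / 2 * (1 + ‖y‖) ≤ ‖x - y‖ := by nlinarith
  rw [← Real.mul_rpow (by linarith) (by linarith)]
  exact Real.rpow_le_rpow_of_nonpos (mul_pos (by linarith) (by linarith)) h2 (by linarith)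

variable [InnerProductSpace ℝ E] [FiniteDimensional ℝ E] [MeasurableSpace E] [BorelSpace E]
  {F : Type*} [NormedAddCommGroup F] {k : E → F} {C q : ℝ}

theorem aestronglyMeasurable_comp_sub_ball_compl (hk : ContinuousOn k {0}ᶜ) {x : E}
    (hx : x ∈ ball (0 : E) 1) :
    AEStronglyMeasurable (fun y ↦ k (x - y)) (volume.restrict (ball (0 : E) 1)ᶜ) :=
  (hk.comp (continuous_const.sub continuous_id).continuousOn
    fun _ hy ↦ sub_ne_zero_of_mem_ball_compl hx hy).aestronglyMeasurable measurableSet_ball.compl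

theorem integrableOn_comp_sub_ball_compl (hq : (finrank ℝ E : ℝ) < q)
    (hk : ContinuousOn k {0}ᶜ) (hb : ∀ u ≠ 0, ‖k u‖ ≤ C * ‖u‖ ^ (-q)) (hC : 0 ≤ C) {x : E}
    (hx : x ∈ ball (0 : E) 1) :
    IntegrableOn (fun y ↦ k (x - y)) (ball (0 : E) 1)ᶜ := by
  have hq0 : 0 ≤ q := (Nat.cast_nonneg _).trans hq.le
  refine Integrable.mono' (g := fun y ↦ C * (((1 - ‖x‖) / 2) ^ (-q) * (1 + ‖y‖) ^ (-q)))
    (((integrable_one_add_norm hq).const_mul _).const_mul _).integrableOn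
    (aestronglyMeasurable_comp_sub_ball_compl hk hx) ?_
  refine (ae_restrict_iff' measurableSet_ball.compl).2 (ae_of_all _ fun y hy ↦ ?_)
  exact (hb _ (sub_ne_zero_of_mem_ball_compl hx hy)).trans (mul_le_mul_of_nonneg_left
    (norm_sub_rpow_neg_le (by simpa using hx) hq0 le_rfl hy) hC)

/-- Differentiation under the integral sign for the convolution of a kernel singular at the origin
with the indicator function of the complement of the unit ball. -/
theorem hasFDerivAt_integral_ball_compl [NormedSpace ℝ F] {k' : E → E →L[ℝ] F} {C' q' : ℝ}
    (hq : (finrank ℝ E : ℝ) < q) (hq' : (finrank ℝ E : ℝ) < q') (hC : 0 ≤ C) (hC' : 0 ≤ C')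
    (hk : ∀ u ≠ 0, HasFDerivAt k (k' u) u) (hk' : ContinuousOn k' {0}ᶜ)
    (hb : ∀ u ≠ 0, ‖k u‖ ≤ C * ‖u‖ ^ (-q)) (hb' : ∀ u ≠ 0, ‖k' u‖ ≤ C' * ‖u‖ ^ (-q'))
    {x : E} (hx : x ∈ ball (0 : E) 1) :
    HasFDerivAt (fun z ↦ ∫ y in (ball (0 : E) 1)ᶜ, k (z - y))
      (∫ y in (ball (0 : E) 1)ᶜ, k' (x - y)) x := by
  have hx1 : ‖x‖ < 1 := by simpa using hx
  have hkc : ContinuousOn k {0}ᶜ := fun u hu ↦ (hk u hu).continuousAt.continuousWithinAt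
  have hq0 : 0 ≤ q' := (Nat.cast_nonneg _).trans hq'.le
  have hball : ball (0 : E) ((1 + ‖x‖) / 2) ⊆ ball 0 1 := ball_subset_ball (by linarith)
  refine hasFDerivAt_integral_of_dominated_of_fderiv_le
    (μ := volume.restrict (ball (0 : E) 1)ᶜ) (F := fun z y ↦ k (z - y))
    (F' := fun z y ↦ k' (z - y)) (x₀ := x) (s := ball (0 : E) ((1 + ‖x‖) / 2))
    (bound := fun y ↦ C' * (((1 - (1 + ‖x‖) / 2) / 2) ^ (-q') * (1 + ‖y‖) ^ (-q')))
    (isOpen_ball.mem_nhds (by rw [mem_ball_zero_iff]; linarith)) ?_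
    (integrableOn_comp_sub_ball_compl hq hkc hb hC hx)
    (aestronglyMeasurable_comp_sub_ball_compl hk' hx) ?_
    (((integrable_one_add_norm hq').const_mul _).const_mul _).integrableOn ?_
  · filter_upwards [isOpen_ball.mem_nhds hx] with z hz
    exact aestronglyMeasurable_comp_sub_ball_compl hkc hz
  · refine (ae_restrict_iff' measurableSet_ball.compl).2 (ae_of_all _ fun y hy z hz ↦ ?_)
    exact (hb' _ (sub_ne_zero_of_mem_ball_compl (hball hz) hy)).trans
      (mul_le_mul_of_nonneg_left (norm_sub_rpow_neg_le (by linarith) hq0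
        (mem_ball_zero_iff.1 hz).le hy) hC')
  · refine (ae_restrict_iff' measurableSet_ball.compl).2 (ae_of_all _ fun y hy z hz ↦ ?_)
    exact (hk _ (sub_ne_zero_of_mem_ball_compl (hball hz) hy)).comp z
      ((hasFDerivAt_id z).sub_const y)

theorem setIntegral_ball_compl_comp_linearIsometryEquiv [NormedSpace ℝ F] (L : E ≃ₗᵢ[ℝ] E)
    (f : E → F) :
    ∫ y in (ball (0 : E) 1)ᶜ, f (L y) = ∫ y in (ball (0 : E) 1)ᶜ, f y := by
  have h := L.measurePreserving.setIntegral_preimage_emb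
    L.toHomeomorph.measurableEmbedding f (ball (0 : E) 1)ᶜ
  rwa [Set.preimage_compl, show L ⁻¹' ball (0 : E) 1 = ball 0 1 by ext; simp] at h

/-- The integrand is odd under the point reflection `y ↦ 2 • x - y`, and among two points exchanged
by it, the one farther from the origin carries the positive value. -/
theorem integral_ball_compl_inner_sub_pos {r : ℝ} {x : E} (hx : x ∈ ball (0 : E) 1) (hx0 : x ≠ 0)
    (hint : IntegrableOn (fun y ↦ ‖y - x‖ ^ r * inner ℝ (y - x) x) (ball (0 : E) 1)ᶜ) :
    0 < ∫ y in (ball (0 : E) 1)ᶜ, ‖y - x‖ ^ r * inner ℝ (y - x) x := by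
  have hx1 : ‖x‖ < 1 := by simpa using hx
  have hxp : 0 < ‖x‖ := norm_pos_iff.2 hx0
  set A := (ball (0 : E) 1)ᶜ with hA
  have hAm : MeasurableSet A := measurableSet_ball.compl
  set g : E → ℝ := fun y ↦ ‖y - x‖ ^ r * inner ℝ (y - x) x with hg
  set G : E → ℝ := A.indicator g with hG
  have hGi : Integrable G := (integrable_indicator_iff hAm).2 hint
  have hodd (y : E) : g ((2 : ℝ) • x - y) = -g y := by
    have : (2 : ℝ) • x - y - x = -(y - x) := by rw [two_smul]; abel
    simp only [hg, this, norm_neg, inner_neg_left, mul_neg]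
  have hnorm (y : E) : ‖y‖ ^ 2 - ‖(2 : ℝ) • x - y‖ ^ 2 = 4 * inner ℝ (y - x) x := by
    rw [norm_sub_sq_real, norm_smul, inner_smul_left, inner_sub_left, real_inner_self_eq_norm_sq,
      real_inner_comm x y]
    simp
    ring
  have hmem (y : E) : y ∈ A ↔ 1 ≤ ‖y‖ := by simp [hA]
  have hrefl : ∫ y, G ((2 : ℝ) • x - y) = ∫ y, G y := integral_sub_left_eq_self G volume _
  have hGi' : Integrable (fun y ↦ G ((2 : ℝ) • x - y)) := hGi.comp_sub_left _
  have hnn : 0 ≤ fun y ↦ G y + G ((2 : ℝ) • x - y) := by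
    intro y
    by_cases h1 : y ∈ A <;> by_cases h2 : (2 : ℝ) • x - y ∈ A
    · simp [hG, h1, h2, hodd]
    · simp only [hG, h1, h2, Set.indicator_of_mem, Set.indicator_of_notMem, not_false_eq_true,
        Pi.zero_apply, add_zero]
      rw [hmem] at h1 h2
      have := hnorm y
      have := norm_nonneg ((2 : ℝ) • x - y)
      exact mul_nonneg (by positivity) (by nlinarith)
    · simp only [hG, h1, h2, Set.indicator_of_mem, Set.indicator_of_notMem, not_false_eq_true,
        Pi.zero_apply, zero_add, hodd]
      rw [hmem] at h1 h2
      have := hnorm y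
      have := norm_nonneg y
      exact neg_nonneg.2 (mul_nonpos_of_nonneg_of_nonpos (by positivity) (by nlinarith))
    · simp [hG, h1, h2]
  have hpos : 0 < ∫ y, (G y + G ((2 : ℝ) • x - y)) := by
    rw [integral_pos_iff_support_of_nonneg hnn (hGi.add hGi')]
    have hUo : IsOpen {y : E | 1 < ‖y‖ ∧ ‖(2 : ℝ) • x - y‖ < 1} :=
      (isOpen_lt continuous_const continuous_norm).inter
        (isOpen_lt (continuous_const.sub continuous_id).norm continuous_const)
    refine (hUo.measure_pos volume ⟨((1 + ‖x‖) / ‖x‖) • x, ?_, ?_⟩).trans_le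
      (measure_mono fun y hy ↦ ?_)
    · rw [norm_smul, Real.norm_of_nonneg (by positivity), div_mul_cancel₀ _ hxp.ne']
      linarith
    · rw [← sub_smul, norm_smul, Real.norm_eq_abs,
        show (2 : ℝ) - (1 + ‖x‖) / ‖x‖ = (‖x‖ - 1) / ‖x‖ by field_simp; ring, abs_div,
        abs_of_pos hxp, div_mul_cancel₀ _ hxp.ne', abs_lt]
      constructor <;> linarith
    · obtain ⟨h1, h2⟩ := hy
      have h1' : y ∈ A := (hmem y).2 h1.le
      have h2' : (2 : ℝ) • x - y ∉ A := by rw [hmem]; exact not_le.2 h2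
      have := hnorm y
      have := norm_nonneg ((2 : ℝ) • x - y)
      have hi : 0 < inner ℝ (y - x) x := by nlinarith
      have hyx : 0 < ‖y - x‖ := norm_pos_iff.2 fun h ↦ by simp [h] at hi
      rw [Function.mem_support]
      simp only [hG, h1', h2', Set.indicator_of_mem, Set.indicator_of_notMem, not_false_eq_true,
        add_zero]
      exact (mul_pos (Real.rpow_pos_of_pos hyx r) hi).ne'
  rw [integral_add hGi hGi', hrefl, hG, integral_indicator hAm] at hpos
  linarith

theorem integral_ball_compl_norm_rpow_mul_inner_sq {r : ℝ}
    (hint : ∀ v : E, IntegrableOn (fun y ↦ ‖y‖ ^ r * inner ℝ y v ^ 2) (ball (0 : E) 1)ᶜ) (v : E) :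
    (finrank ℝ E : ℝ) * ∫ y in (ball (0 : E) 1)ᶜ, ‖y‖ ^ r * inner ℝ y v ^ 2 =
      ‖v‖ ^ 2 * ∫ y in (ball (0 : E) 1)ᶜ, ‖y‖ ^ r * ‖y‖ ^ 2 := by
  set b := stdOrthonormalBasis ℝ E
  have hrot (i : Fin (finrank ℝ E)) :
      ∫ y in (ball (0 : E) 1)ᶜ, ‖y‖ ^ r * inner ℝ y (‖v‖ • b i) ^ 2 =
        ∫ y in (ball (0 : E) 1)ᶜ, ‖y‖ ^ r * inner ℝ y v ^ 2 := by
    have hn : ‖v‖ = ‖‖v‖ • b i‖ := by simp [norm_smul]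
    obtain ⟨L, hL⟩ : ∃ L : E ≃ₗᵢ[ℝ] E, L v = ‖v‖ • b i := ⟨_, Submodule.reflection_sub hn⟩
    rw [← setIntegral_ball_compl_comp_linearIsometryEquiv L]
    simp only [← hL, LinearIsometryEquiv.norm_map, LinearIsometryEquiv.inner_map_map]
  calc (finrank ℝ E : ℝ) * ∫ y in (ball (0 : E) 1)ᶜ, ‖y‖ ^ r * inner ℝ y v ^ 2
      = ∑ i, ∫ y in (ball (0 : E) 1)ᶜ, ‖y‖ ^ r * inner ℝ y (‖v‖ • b i) ^ 2 := by
        simp [hrot]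
    _ = ∫ y in (ball (0 : E) 1)ᶜ, ∑ i, ‖y‖ ^ r * inner ℝ y (‖v‖ • b i) ^ 2 :=
        (integral_finsetSum _ fun i _ ↦ hint _).symm
    _ = _ := by
        rw [← integral_const_mul]
        refine integral_congr_ae (ae_of_all _ fun y ↦ ?_)
        simp only
        rw [← b.sum_sq_inner_left y, Finset.mul_sum, Finset.mul_sum]
        refine Finset.sum_congr rfl fun i _ ↦ ?_
        rw [inner_smul_right]
        ring

end BallCompl

section BallPotential

variable {N : ℕ} {s : ℝ} {x : EuclideanSpace ℝ (Fin N)}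

theorem integrableOn_normRpowFDeriv_sub (hs : 0 < s) (hx : x ∈ ball 0 1) :
    IntegrableOn (fun y ↦ normRpowFDeriv (-((N : ℝ) + 2 * s)) (x - y)) (ball 0 1)ᶜ :=
  integrableOn_comp_sub_ball_compl (q := N + 2 * s + 1)
    (by rw [finrank_euclideanSpace_fin]; linarith) (continuousOn_normRpowFDeriv _)
    (fun u hu ↦ (norm_normRpowFDeriv_le _ hu).trans_eq (by ring_nf)) (abs_nonneg _) hx

theorem integrableOn_normRpowHessian_sub (hs : 0 < s) (v : EuclideanSpace ℝ (Fin N))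
    (hx : x ∈ ball 0 1) :
    IntegrableOn (fun y ↦ normRpowHessian (-((N : ℝ) + 2 * s)) v (x - y)) (ball 0 1)ᶜ :=
  integrableOn_comp_sub_ball_compl (q := N + 2 * s + 2)
    (C := (|-((N : ℝ) + 2 * s)| + |-((N : ℝ) + 2 * s)| * |-((N : ℝ) + 2 * s) - 2|) * ‖v‖)
    (by rw [finrank_euclideanSpace_fin]; linarith) (continuousOn_normRpowHessian _ v)
    (fun u hu ↦ (norm_normRpowHessian_le _ v hu).trans_eq (by ring_nf)) (by positivity) hx

theorem integrableOn_ball_compl_norm_rpow {q : ℝ} (hq : (N : ℝ) < q) :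
    IntegrableOn (fun y : EuclideanSpace ℝ (Fin N) ↦ ‖y‖ ^ (-q)) (ball 0 1)ᶜ := by
  have h := integrableOn_comp_sub_ball_compl (E := EuclideanSpace ℝ (Fin N)) (C := 1) (q := q)
    (by rwa [finrank_euclideanSpace_fin]) (continuousOn_norm_rpow (-q))
    (fun u _ ↦ by rw [one_mul, Real.norm_of_nonneg (by positivity)]) zero_le_one
    (mem_ball_self one_pos)
  simpa using h

theorem hasFDerivAt_ballPotential (hs : 0 < s) (hx : x ∈ ball 0 1) :
    HasFDerivAt (ballPotential N s)
      (∫ y in (ball 0 1)ᶜ, normRpowFDeriv (-((N : ℝ) + 2 * s)) (x - y)) x :=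
  hasFDerivAt_integral_ball_compl (C := 1) (q := N + 2 * s) (q' := N + 2 * s + 1)
    (by rw [finrank_euclideanSpace_fin]; linarith) (by rw [finrank_euclideanSpace_fin]; linarith)
    zero_le_one (abs_nonneg _) (fun _ hu ↦ hasFDerivAt_norm_rpow_of_ne_zero _ hu)
    (continuousOn_normRpowFDeriv _)
    (fun u _ ↦ by rw [one_mul, Real.norm_of_nonneg (by positivity)])
    (fun u hu ↦ (norm_normRpowFDeriv_le _ hu).trans_eq (by ring_nf)) hx

theorem hasFDerivAt_fderiv_ballPotential_apply (hs : 0 < s) (v : EuclideanSpace ℝ (Fin N))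
    (hx : x ∈ ball 0 1) :
    HasFDerivAt (fun z ↦ fderiv ℝ (ballPotential N s) z v)
      (∫ y in (ball 0 1)ᶜ, normRpowHessian (-((N : ℝ) + 2 * s)) v (x - y)) x := by
  refine HasFDerivAt.congr_of_eventuallyEq
    (f := fun z ↦ ∫ y in (ball 0 1)ᶜ, normRpowFDeriv (-((N : ℝ) + 2 * s)) (z - y) v) ?_
    (Filter.eventually_of_mem (isOpen_ball.mem_nhds hx) fun z hz ↦ ?_)
  · exact hasFDerivAt_integral_ball_compl (q := N + 2 * s + 1) (q' := N + 2 * s + 2)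
      (k := fun u ↦ normRpowFDeriv (-((N : ℝ) + 2 * s)) u v)
      (C := |-((N : ℝ) + 2 * s)| * ‖v‖)
      (C' := (|-((N : ℝ) + 2 * s)| + |-((N : ℝ) + 2 * s)| * |-((N : ℝ) + 2 * s) - 2|) * ‖v‖)
      (by rw [finrank_euclideanSpace_fin]; linarith) (by rw [finrank_euclideanSpace_fin]; linarith)
      (by positivity) (by positivity) (fun _ hu ↦ hasFDerivAt_normRpowFDeriv_apply _ v hu)
      (continuousOn_normRpowHessian _ v)
      (fun u hu ↦ (norm_normRpowFDeriv_apply_le _ v hu).trans_eq (by ring_nf))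
      (fun u hu ↦ (norm_normRpowHessian_le _ v hu).trans_eq (by ring_nf)) hx
  · simp only
    rw [(hasFDerivAt_ballPotential hs hz).fderiv,
      ContinuousLinearMap.integral_apply (integrableOn_normRpowFDeriv_sub hs hz)]

theorem fderiv_fderiv_ballPotential_apply (hs : 0 < s) (hx : x ∈ ball 0 1)
    (v w : EuclideanSpace ℝ (Fin N)) :
    fderiv ℝ (fun z ↦ fderiv ℝ (ballPotential N s) z) x w v =
      ∫ y in (ball 0 1)ᶜ, normRpowHessian (-((N : ℝ) + 2 * s)) v (x - y) w := by
  have hd : DifferentiableAt ℝ (fun z ↦ fderiv ℝ (ballPotential N s) z) x :=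
    differentiableAt_of_forall_clm_apply fun u ↦
      (hasFDerivAt_fderiv_ballPotential_apply hs u hx).differentiableAt
  have h := (hasFDerivAt_fderiv_ballPotential_apply hs v hx).fderiv
  rw [fderiv_clm_apply hd (differentiableAt_const v)] at h
  rw [← ContinuousLinearMap.integral_apply (integrableOn_normRpowHessian_sub hs v hx), ← h]
  simp

theorem ballPotential_eq_of_norm_eq (s : ℝ) {x y : EuclideanSpace ℝ (Fin N)} (h : ‖x‖ = ‖y‖) :
    ballPotential N s x = ballPotential N s y := by
  obtain ⟨L, rfl⟩ : ∃ L : EuclideanSpace ℝ (Fin N) ≃ₗᵢ[ℝ] EuclideanSpace ℝ (Fin N), L x = y :=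
    ⟨_, Submodule.reflection_sub h⟩
  rw [ballPotential, ballPotential, ← setIntegral_ball_compl_comp_linearIsometryEquiv L
    (fun z ↦ ‖L x - z‖ ^ (-((N : ℝ) + 2 * s)))]
  simp only [← map_sub, LinearIsometryEquiv.norm_map]

theorem fderiv_ballPotential_self_pos (hs : 0 < s) (hx : x ∈ ball 0 1) (hx0 : x ≠ 0) :
    0 < fderiv ℝ (ballPotential N s) x x := by
  have hp : 0 < (N : ℝ) + 2 * s := by positivity
  have hint := integrableOn_normRpowFDeriv_sub hs hx
  have e (y : EuclideanSpace ℝ (Fin N)) : normRpowFDeriv (-((N : ℝ) + 2 * s)) (x - y) x =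
      ((N : ℝ) + 2 * s) * (‖y - x‖ ^ (-((N : ℝ) + 2 * s) - 2) * inner ℝ (y - x) x) := by
    rw [normRpowFDeriv_apply, ← neg_sub y x, norm_neg, inner_neg_left]
    ring
  have hint' := hint.apply_continuousLinearMap x
  simp only [e] at hint'
  rw [(hasFDerivAt_ballPotential hs hx).fderiv, ContinuousLinearMap.integral_apply hint]
  simp only [e]
  rw [integral_const_mul]
  exact mul_pos hp (integral_ball_compl_inner_sub_pos hx hx0
    ((integrable_const_mul_iff hp.ne'.isUnit _).1 hint'))

theorem ballPotential_lt_of_norm_lt (hs : 0 < s) {x y : EuclideanSpace ℝ (Fin N)}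
    (hy : y ∈ ball 0 1) (h : ‖x‖ < ‖y‖) : ballPotential N s x < ballPotential N s y := by
  have hy0 : 0 < ‖y‖ := (norm_nonneg x).trans_lt h
  have hy1 : ‖y‖ < 1 := by simpa using hy
  have hmem {t : ℝ} (ht : t ∈ Set.Icc (0 : ℝ) 1) : t • y ∈ ball (0 : EuclideanSpace ℝ (Fin N)) 1 := by
    rw [mem_ball_zero_iff, norm_smul, Real.norm_of_nonneg ht.1]
    nlinarith [ht.2]
  have hd {t : ℝ} (ht : t ∈ Set.Icc (0 : ℝ) 1) : HasDerivAt (fun t : ℝ ↦ ballPotential N s (t • y))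
      (fderiv ℝ (ballPotential N s) (t • y) y) t := by
    have h1 : HasDerivAt (fun t : ℝ ↦ t • y) y t := by
      simpa using (hasDerivAt_id t).smul_const y
    exact (hasFDerivAt_ballPotential hs (hmem ht)).differentiableAt.hasFDerivAt.comp_hasDerivAt t h1
  have hmono : StrictMonoOn (fun t : ℝ ↦ ballPotential N s (t • y)) (Set.Icc 0 1) := by
    refine strictMonoOn_of_deriv_pos (convex_Icc 0 1)
      (fun t ht ↦ (hd ht).continuousAt.continuousWithinAt) fun t ht ↦ ?_
    rw [interior_Icc] at ht
    have ht' := Set.Ioo_subset_Icc_self ht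
    rw [(hd ht').deriv]
    have := fderiv_ballPotential_self_pos hs (hmem ht')
      (smul_ne_zero ht.1.ne' (norm_pos_iff.1 hy0))
    rw [map_smul, smul_eq_mul] at this
    exact pos_of_mul_pos_right this ht.1.le
  have hr : 0 ≤ ‖x‖ / ‖y‖ := by positivity
  have hr1 : ‖x‖ / ‖y‖ < 1 := (div_lt_one hy0).2 h
  have key := hmono ⟨hr, hr1.le⟩ ⟨zero_le_one, le_rfl⟩ hr1
  simp only [one_smul] at key
  rwa [ballPotential_eq_of_norm_eq s (y := x)] at key
  rw [norm_smul, Real.norm_of_nonneg hr, div_mul_cancel₀ _ hy0.ne']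

theorem ballPotential_zero_le (hs : 0 < s) (hx : x ∈ ball 0 1) :
    ballPotential N s 0 ≤ ballPotential N s x := by
  rcases eq_or_ne x 0 with rfl | hx0
  · exact le_rfl
  · exact (ballPotential_lt_of_norm_lt hs hx (by simpa using hx0)).le

theorem integral_ball_compl_norm_rpow_pos (hN : 0 < N) {q : ℝ} (hq : (N : ℝ) < q) :
    0 < ∫ y in (ball (0 : EuclideanSpace ℝ (Fin N)) 1)ᶜ, ‖y‖ ^ (-q) := by
  have : Nonempty (Fin N) := ⟨⟨0, hN⟩⟩
  rw [setIntegral_pos_iff_support_of_nonneg_ae (ae_of_all _ fun y ↦ by positivity)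
    (integrableOn_ball_compl_norm_rpow hq)]
  have hUo : IsOpen {y : EuclideanSpace ℝ (Fin N) | 1 < ‖y‖} :=
    isOpen_lt continuous_const continuous_norm
  obtain ⟨z, hz⟩ := NormedSpace.exists_lt_norm ℝ (EuclideanSpace ℝ (Fin N)) 1
  refine (hUo.measure_pos volume ⟨z, hz⟩).trans_le (measure_mono fun y (hy : 1 < ‖y‖) ↦ ⟨?_, ?_⟩)
  · exact (Real.rpow_pos_of_pos (one_pos.trans hy) _).ne'
  · simpa using hy.le

theorem fderiv_fderiv_ballPotential_zero_pos (hN : 0 < N) (hs : 0 < s)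
    {v : EuclideanSpace ℝ (Fin N)} (hv : v ≠ 0) :
    0 < fderiv ℝ (fun z ↦ fderiv ℝ (ballPotential N s) z) 0 v v := by
  set p := (N : ℝ) + 2 * s with hp
  have hp0 : 0 < p := by positivity
  have hNp : (N : ℝ) < p := by linarith
  have h0 : (0 : EuclideanSpace ℝ (Fin N)) ∈ ball 0 1 := mem_ball_self one_pos
  have hM := integrableOn_ball_compl_norm_rpow (N := N) (q := p + 2) (by linarith)
  have hMpos := integral_ball_compl_norm_rpow_pos hN (q := p + 2) (by linarith)
  have e (y w : EuclideanSpace ℝ (Fin N)) : normRpowHessian (-p) w (0 - y) w =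
      -p * ‖w‖ ^ 2 * ‖y‖ ^ (-(p + 2)) + p * (p + 2) * (‖y‖ ^ (-(p + 4)) * inner ℝ y w ^ 2) := by
    rw [zero_sub, normRpowHessian_apply, norm_neg, inner_neg_left, real_inner_self_eq_norm_sq,
      show -p - 2 = -(p + 2) by ring, show -p - 4 = -(p + 4) by ring]
    ring
  have hJ (w : EuclideanSpace ℝ (Fin N)) :
      IntegrableOn (fun y ↦ ‖y‖ ^ (-(p + 4)) * inner ℝ y w ^ 2) (ball 0 1)ᶜ := by
    have h1 := (integrableOn_normRpowHessian_sub hs w h0).apply_continuousLinearMap w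
    simp only [← hp, e] at h1
    have h2 := h1.sub (hM.const_mul (-p * ‖w‖ ^ 2))
    refine (integrable_const_mul_iff (c := p * (p + 2)) (by positivity : p * (p + 2) ≠ 0).isUnit
      _).1 (h2.congr (ae_of_all _ fun y ↦ ?_))
    simp
  have hrad : ∫ y in (ball (0 : EuclideanSpace ℝ (Fin N)) 1)ᶜ, ‖y‖ ^ (-(p + 4)) * ‖y‖ ^ 2 =
      ∫ y in (ball (0 : EuclideanSpace ℝ (Fin N)) 1)ᶜ, ‖y‖ ^ (-(p + 2)) := by
    refine setIntegral_congr_fun measurableSet_ball.compl fun y hy ↦ ?_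
    have hy' : 0 < ‖y‖ := one_pos.trans_le (by simpa using hy)
    rw [← Real.rpow_natCast, ← Real.rpow_add hy']
    congr 1; push_cast; ring
  have hav := integral_ball_compl_norm_rpow_mul_inner_sq hJ v
  rw [hrad, finrank_euclideanSpace_fin] at hav
  rw [fderiv_fderiv_ballPotential_apply hs h0]
  simp only [← hp, e]
  rw [integral_add (hM.const_mul _) ((hJ v).const_mul _), integral_const_mul, integral_const_mul]
  set M := ∫ y in (ball (0 : EuclideanSpace ℝ (Fin N)) 1)ᶜ, ‖y‖ ^ (-(p + 2))
  set J := ∫ y in (ball (0 : EuclideanSpace ℝ (Fin N)) 1)ᶜ, ‖y‖ ^ (-(p + 4)) * inner ℝ y v ^ 2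
  have hN' : (0 : ℝ) < N := by exact_mod_cast hN
  have hvM : 0 < ‖v‖ ^ 2 * M := mul_pos (by positivity) hMpos
  refine pos_of_mul_pos_right (a := (N : ℝ)) ?_ hN'.le
  have : (N : ℝ) * (-p * ‖v‖ ^ 2 * M + p * (p + 2) * J) = p * (p + 2 - N) * (‖v‖ ^ 2 * M) := by
    linear_combination p * (p + 2) * hav
  rw [this]
  exact mul_pos (mul_pos hp0 (by linarith)) hvM

end BallPotential

/-- the potential `V_{B_1}` is a radial function on the unit ball, strictly
increasing in `|x|`, the origin is its unique critical point, and it is a non-degenerate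
global minimum. -/
theorem ballPotential_radial_monotone_unique_critical
    (N : ℕ) (hN : 0 < N) (s : ℝ) (hs : 0 < s) (hs' : s < 1/2) :
    -- radial
    (∀ x y : EuclideanSpace ℝ (Fin N), x ∈ Metric.ball 0 1 → y ∈ Metric.ball 0 1 →
      ‖x‖ = ‖y‖ → ballPotential N s x = ballPotential N s y) ∧
    -- strictly increasing in the radius
    (∀ x y : EuclideanSpace ℝ (Fin N), x ∈ Metric.ball 0 1 → y ∈ Metric.ball 0 1 →
      ‖x‖ < ‖y‖ → ballPotential N s x < ballPotential N s y) ∧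
    -- the origin is a global minimum
    (∀ x ∈ Metric.ball (0 : EuclideanSpace ℝ (Fin N)) 1,
      ballPotential N s 0 ≤ ballPotential N s x) ∧
    -- the origin is the unique critical point in the ball
    (fderiv ℝ (ballPotential N s) 0 = 0) ∧
    (∀ x ∈ Metric.ball (0 : EuclideanSpace ℝ (Fin N)) 1,
      fderiv ℝ (ballPotential N s) x = 0 → x = 0) ∧
    -- non-degeneracy: the Hessian at the origin is positive definite
    (∀ v : EuclideanSpace ℝ (Fin N), v ≠ 0 →
      0 < fderiv ℝ (fun z => fderiv ℝ (ballPotential N s) z) 0 v v) := by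
  refine ⟨fun x y _ _ h ↦ ballPotential_eq_of_norm_eq s h,
    fun x y _ hy h ↦ ballPotential_lt_of_norm_lt hs hy h,
    fun x hx ↦ ballPotential_zero_le hs hx, ?_, fun x hx h ↦ ?_,
    fun v hv ↦ fderiv_fderiv_ballPotential_zero_pos hN hs hv⟩
  · exact IsLocalMin.fderiv_eq_zero (Filter.eventually_of_mem
      (Metric.isOpen_ball.mem_nhds (Metric.mem_ball_self one_pos))
      fun x hx ↦ ballPotential_zero_le hs hx)
  · by_contra hx0
    have := fderiv_ballPotential_self_pos hs hx hx0
    simp [h] at this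
end

section
/- Expansion of the relative fractional perimeter of small balls: for Ω ⊂ ℝ^N bounded open, Θ ⊂ Ω compact, s ∈ (0,1/2), and x̄ ∈ Θ/ε with B_1(x̄) ⊂ Ω/ε, one has P_s(B_1(x̄), Ω/ε) = P_s(B_1(x̄)) − ω_N ε^{2s} V_Ω(ε x̄) + O(ε^{1+2s}) as ε → 0, where ω_N = |B_1| and V_Ω(x) = ∫_{Ω^c} |x−y|^{−(N+2s)} dy, with the O-constant uniform over x̄ ∈ Θ/ε. -/
open MeasureTheory Pointwise

variable (N : ℕ) (s : ℝ)

/-- Relative fractional `s`-perimeter, real-valued. -/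
noncomputable def relPerimeterR (E Ω : Set (EuclideanSpace ℝ (Fin N))) : ℝ :=
  ∫ x in E, ∫ y in Ω \ E, ‖x - y‖ ^ (-((N : ℝ) + 2*s))

/-- The nonlocal potential `V_Ω(x) = ∫_{Ωᶜ} |x-y|^{-(N+2s)} dy`. -/
noncomputable def nonlocalPotential (Ω : Set (EuclideanSpace ℝ (Fin N)))
    (x : EuclideanSpace ℝ (Fin N)) : ℝ :=
  ∫ y in Ωᶜ, ‖x - y‖ ^ (-((N : ℝ) + 2*s))

/-- The mass of the Riesz-type kernel `‖x - y‖ ^ (-(N + q))` outside the ball of radius `r`. -/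
theorem integral_norm_sub_rpow_compl_ball (hN : 0 < N) {q r : ℝ} (hq : 0 < q) (hr : 0 < r)
    (x : EuclideanSpace ℝ (Fin N)) :
    IntegrableOn (fun y ↦ ‖x - y‖ ^ (-((N : ℝ) + q))) {y | r ≤ ‖x - y‖} ∧
      ∫ y in {y | r ≤ ‖x - y‖}, ‖x - y‖ ^ (-((N : ℝ) + q)) =
        N * volume.real (Metric.ball (0 : EuclideanSpace ℝ (Fin N)) 1) / q * r ^ (-q) := by
  have : Nonempty (Fin N) := ⟨⟨0, hN⟩⟩
  set f : ℝ → ℝ := (Set.Ici r).indicator fun t ↦ t ^ (-((N : ℝ) + q)) with hf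
  have hmeas : MeasurableSet {y : EuclideanSpace ℝ (Fin N) | r ≤ ‖x - y‖} :=
    measurableSet_le measurable_const (by fun_prop)
  have hind : ({y | r ≤ ‖x - y‖}.indicator fun y ↦ ‖x - y‖ ^ (-((N : ℝ) + q))) =
      fun y ↦ f ‖x - y‖ := by
    ext y
    simp only [hf, Set.indicator, Set.mem_ofPred_eq, Set.mem_Ici]
  have hradial : Set.EqOn (fun y : ℝ ↦ y ^ (Module.finrank ℝ (EuclideanSpace ℝ (Fin N)) - 1) • f y)
      ((Set.Ici r).indicator fun t ↦ t ^ (-q - 1)) (Set.Ioi 0) := by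
    intro y hy
    have hy' : 0 < y := hy
    by_cases h : y ∈ Set.Ici r
    · simp only [hf, Set.indicator_of_mem h, finrank_euclideanSpace_fin, smul_eq_mul]
      rw [← Real.rpow_natCast, ← Real.rpow_add hy', Nat.cast_sub hN]
      congr 1
      push_cast
      ring
    · simp [hf, Set.indicator_of_notMem h]
  have hsub : Set.Ioi (0 : ℝ) ∩ Set.Ici r = Set.Ici r :=
    Set.inter_eq_right.2 fun y hy ↦ hr.trans_le hy
  constructor
  · rw [← integrable_indicator_iff hmeas, hind]
    refine Integrable.comp_sub_left (f := fun z ↦ f ‖z‖) ?_ x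
    rw [integrable_fun_norm_addHaar, integrableOn_congr_fun hradial measurableSet_Ioi,
      IntegrableOn, integrable_indicator_iff measurableSet_Ici, IntegrableOn,
      Measure.restrict_restrict measurableSet_Ici, Set.inter_comm, hsub, ← IntegrableOn,
      integrableOn_Ici_iff_integrableOn_Ioi]
    exact integrableOn_Ioi_rpow_of_lt (by linarith) hr
  · rw [← integral_indicator hmeas, hind, integral_sub_left_eq_self (fun z ↦ f ‖z‖) volume x,
      integral_fun_norm_addHaar, setIntegral_congr_fun measurableSet_Ioi hradial,
      setIntegral_indicator measurableSet_Ici, hsub, integral_Ici_eq_integral_Ioi,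
      integral_Ioi_rpow_of_lt (by linarith) hr]
    simp only [finrank_euclideanSpace_fin, nsmul_eq_mul, smul_eq_mul, sub_add_cancel]
    field_simp

theorem integrableOn_ball_one_sub_norm_rpow (hN : 0 < N) {a : ℝ} (ha : a < 1)
    (c : EuclideanSpace ℝ (Fin N)) :
    IntegrableOn (fun x ↦ (1 - ‖x - c‖) ^ (-a)) (Metric.ball c 1) := by
  have : Nonempty (Fin N) := ⟨⟨0, hN⟩⟩
  have h₀ : IntegrableOn (fun x : EuclideanSpace ℝ (Fin N) ↦ (1 - ‖x‖) ^ (-a))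
      (Metric.ball 0 1) := by
    rw [integrableOn_fun_norm_addHaar volume (f := fun t ↦ (1 - t) ^ (-a))]
    have h₁ : IntegrableOn (fun t : ℝ ↦ (1 - t) ^ (-a)) (Set.Ioo 0 1) := by
      have h := (intervalIntegral.intervalIntegrable_rpow' (a := 0) (b := 1)
        (show -1 < -a by linarith)).comp_sub_left 1
      simp only [sub_zero, sub_self] at h
      exact ((intervalIntegrable_iff_integrableOn_Ioo_of_le zero_le_one).1 h.symm)
    refine h₁.mono' (by fun_prop) ?_
    filter_upwards [ae_restrict_mem measurableSet_Ioo] with t ht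
    have h₂ : 0 ≤ (1 - t) ^ (-a) := Real.rpow_nonneg (by linarith [ht.2]) _
    rw [norm_smul, Real.norm_of_nonneg h₂, Real.norm_of_nonneg (pow_nonneg ht.1.le _)]
    exact mul_le_of_le_one_left h₂ (pow_le_one₀ ht.1.le ht.2.le)
  rw [← integrable_indicator_iff Metric.isOpen_ball.measurableSet] at h₀ ⊢
  have heq : (Metric.ball c 1).indicator (fun x ↦ (1 - ‖x - c‖) ^ (-a)) = fun x ↦
      (Metric.ball 0 1).indicator (fun x ↦ (1 - ‖x‖) ^ (-a)) (x - c) := by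
    ext x
    simp [Set.indicator, dist_eq_norm]
  rw [heq]
  exact h₀.comp_sub_right c

theorem abs_rpow_neg_sub_rpow_neg_le {p a b : ℝ} (hp : 0 < p) (hb : 2 ≤ b) (hab : |a - b| ≤ 1) :
    |a ^ (-p) - b ^ (-p)| ≤ p * 2 ^ (p + 1) * b ^ (-(p + 1)) := by
  obtain ⟨h₁, h₂⟩ := abs_le.1 hab
  have hbound : ∀ t ∈ Set.Ici (b / 2), ‖-p * t ^ (-p - 1)‖ ≤ p * 2 ^ (p + 1) * b ^ (-(p + 1)) := by
    intro t ht
    have ht' : b / 2 ≤ t := ht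
    have ht₀ : 0 < t := by linarith
    rw [norm_mul, norm_neg, Real.norm_of_nonneg hp.le,
      Real.norm_of_nonneg (Real.rpow_nonneg ht₀.le _), mul_assoc]
    refine mul_le_mul_of_nonneg_left ?_ hp.le
    calc t ^ (-p - 1) ≤ (b / 2) ^ (-p - 1) :=
          Real.rpow_le_rpow_of_nonpos (by linarith) ht' (by linarith)
      _ = 2 ^ (p + 1) * b ^ (-(p + 1)) := by
          rw [Real.div_rpow (by linarith) zero_le_two, show -p - 1 = -(p + 1) by ring,
            Real.rpow_neg zero_le_two, div_inv_eq_mul, mul_comm]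
  have hmvt := (convex_Ici (b / 2)).norm_image_sub_le_of_norm_hasDerivWithin_le
    (f := fun t ↦ t ^ (-p)) (x := b) (y := a)
    (fun t ht ↦ (Real.hasDerivAt_rpow_const
      (Or.inl (by have : b / 2 ≤ t := ht; linarith))).hasDerivWithinAt) hbound
    (Set.mem_Ici.2 (by linarith)) (Set.mem_Ici.2 (by linarith))
  refine hmvt.trans (mul_le_of_le_one_right ?_ hab)
  have : 0 < b := by linarith
  positivity

/-- The inner integral of the fractional perimeter of a unit ball is integrable over the ball. -/
theorem integrableOn_ball_integral_norm_sub_rpow (hN : 0 < N) (hs : 0 < s) (hs' : s < 1 / 2)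
    (c : EuclideanSpace ℝ (Fin N)) {A : Set (EuclideanSpace ℝ (Fin N))}
    (hdisj : Disjoint A (Metric.ball c 1)) :
    IntegrableOn (fun x ↦ ∫ y in A, ‖x - y‖ ^ (-((N : ℝ) + 2 * s))) (Metric.ball c 1) := by
  refine ((integrableOn_ball_one_sub_norm_rpow N hN (a := 2 * s) (by linarith) c).const_mul
    (N * volume.real (Metric.ball (0 : EuclideanSpace ℝ (Fin N)) 1) / (2 * s))).mono' ?_ ?_
  · refine StronglyMeasurable.aestronglyMeasurable (StronglyMeasurable.integral_prod_right ?_)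
    refine Measurable.stronglyMeasurable ?_
    unfold Function.uncurry
    fun_prop
  · filter_upwards [ae_restrict_mem Metric.isOpen_ball.measurableSet] with x hx
    rw [Metric.mem_ball, dist_eq_norm] at hx
    obtain ⟨hint, heq⟩ := integral_norm_sub_rpow_compl_ball N hN (q := 2 * s)
      (r := 1 - ‖x - c‖) (by linarith) (by linarith) x
    rw [Real.norm_of_nonneg (integral_nonneg fun y ↦ Real.rpow_nonneg (norm_nonneg _) _), ← heq]
    refine setIntegral_mono_set hint
      (Filter.Eventually.of_forall fun y ↦ Real.rpow_nonneg (norm_nonneg _) _)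
      (LE.le.eventuallyLE fun y hy ↦ ?_)
    have hy' : 1 ≤ ‖y - c‖ := by
      simpa [dist_eq_norm] using Set.disjoint_left.1 hdisj hy
    have : ‖y - c‖ ≤ ‖x - y‖ + ‖x - c‖ := by
      rw [norm_sub_rev x y]
      simpa using norm_add_le (y - x) (x - c)
    show 1 - ‖x - c‖ ≤ ‖x - y‖
    linarith

/-- The potential of the complement of a set varies slowly on a unit ball far from that
complement. -/
theorem abs_nonlocalPotential_sub_le (hN : 0 < N) (hs : 0 < s)
    {U : Set (EuclideanSpace ℝ (Fin N))} (hU : MeasurableSet U) {R : ℝ} (hR : 2 ≤ R)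
    {c x : EuclideanSpace ℝ (Fin N)} (hc : ∀ y ∈ Uᶜ, R ≤ ‖c - y‖) (hx : ‖x - c‖ ≤ 1) :
    |nonlocalPotential N s U x - nonlocalPotential N s U c| ≤
      (N + 2 * s) * 2 ^ ((N : ℝ) + 2 * s + 1) *
        (N * volume.real (Metric.ball (0 : EuclideanSpace ℝ (Fin N)) 1) / (1 + 2 * s) *
          R ^ (-(1 + 2 * s))) := by
  have hxy : ∀ y, |‖x - y‖ - ‖c - y‖| ≤ 1 := fun y ↦
    (abs_norm_sub_norm_le _ _).trans (by simpa using hx)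
  have hintx : IntegrableOn (fun y ↦ ‖x - y‖ ^ (-((N : ℝ) + 2 * s))) Uᶜ :=
    (integral_norm_sub_rpow_compl_ball N hN (q := 2 * s) (r := 1) (by linarith) one_pos
      x).1.mono_set fun y hy ↦ by
        show 1 ≤ ‖x - y‖
        linarith [(abs_le.1 (hxy y)).1, hc y hy]
  have hintc : IntegrableOn (fun y ↦ ‖c - y‖ ^ (-((N : ℝ) + 2 * s))) Uᶜ :=
    (integral_norm_sub_rpow_compl_ball N hN (q := 2 * s) (r := R) (by linarith) (by linarith)
      c).1.mono_set hc
  obtain ⟨hint, heq⟩ := integral_norm_sub_rpow_compl_ball N hN (q := 1 + 2 * s) (r := R)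
    (by linarith) (by linarith) c
  have hp : 0 < (N : ℝ) + 2 * s := by positivity
  unfold nonlocalPotential
  rw [← integral_sub hintx hintc, ← heq, ← integral_const_mul, ← Real.norm_eq_abs]
  refine (norm_integral_le_of_norm_le ((hint.mono_set hc).const_mul
    (((N : ℝ) + 2 * s) * 2 ^ ((N : ℝ) + 2 * s + 1))) ?_).trans
    (setIntegral_mono_set (hint.const_mul _) (Filter.Eventually.of_forall fun y ↦ ?_)
      (LE.le.eventuallyLE hc))
  · filter_upwards [ae_restrict_mem hU.compl] with y hy
    refine (abs_rpow_neg_sub_rpow_neg_le hp (hR.trans (hc y hy)) (hxy y)).trans_eq ?_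
    congr 2
    ring
  · show 0 ≤ _
    positivity

theorem nonlocalPotential_inv_smul {ε : ℝ} (hε : 0 < ε) (Ω : Set (EuclideanSpace ℝ (Fin N)))
    (x : EuclideanSpace ℝ (Fin N)) :
    nonlocalPotential N s (ε⁻¹ • Ω) x = ε ^ (2 * s) * nonlocalPotential N s Ω (ε • x) := by
  have hset : ε • (ε⁻¹ • Ω)ᶜ = Ωᶜ := by
    ext y
    simp [Set.mem_smul_set_iff_inv_smul_mem₀ hε.ne', Set.mem_inv_smul_set_iff₀ hε.ne',
      smul_inv_smul₀ hε.ne']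
  have h := Measure.setIntegral_comp_smul_of_pos volume
    (fun y : EuclideanSpace ℝ (Fin N) ↦ ‖ε • x - y‖ ^ (-((N : ℝ) + 2 * s))) (ε⁻¹ • Ω)ᶜ hε
  rw [hset] at h
  simp only [← smul_sub, norm_smul, Real.norm_of_nonneg hε.le,
    Real.mul_rpow hε.le (norm_nonneg _), integral_const_mul, finrank_euclideanSpace_fin,
    smul_eq_mul] at h
  unfold nonlocalPotential
  have hpow : ε ^ (-((N : ℝ) + 2 * s)) * (ε ^ (2 * s) * ε ^ N) = 1 := by
    rw [← Real.rpow_natCast, ← Real.rpow_add hε, ← Real.rpow_add hε]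
    rw [show -((N : ℝ) + 2 * s) + (2 * s + N) = 0 by ring, Real.rpow_zero]
  have hN' : (0 : ℝ) < ε ^ N := pow_pos hε N
  calc _ = (ε ^ (2 * s) * ε ^ N) * (ε ^ (-((N : ℝ) + 2 * s)) *
        ∫ y in (ε⁻¹ • Ω)ᶜ, ‖x - y‖ ^ (-((N : ℝ) + 2 * s))) := by
        rw [← mul_assoc, mul_comm (ε ^ (2 * s) * ε ^ N), hpow, one_mul]
    _ = _ := by
        rw [h]
        field_simp

/-- Enlarging the reference set to the whole space changes the relative perimeter of a ball by the
integral over the ball of the potential. -/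
theorem relPerimeterR_ball_sub_univ (hN : 0 < N) (hs : 0 < s) (hs' : s < 1 / 2)
    {U : Set (EuclideanSpace ℝ (Fin N))} (hU : MeasurableSet U) {c : EuclideanSpace ℝ (Fin N)}
    (hc : Metric.ball c 1 ⊆ U) :
    IntegrableOn (nonlocalPotential N s U) (Metric.ball c 1) ∧
    relPerimeterR N s (Metric.ball c 1) U - relPerimeterR N s (Metric.ball c 1) Set.univ =
      -∫ x in Metric.ball c 1, nonlocalPotential N s U x := by
  have hball : MeasurableSet (Metric.ball c 1) := Metric.isOpen_ball.measurableSet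
  have hcompl : Disjoint Uᶜ (Metric.ball c 1) := disjoint_compl_left.mono_right hc
  have hV : IntegrableOn (nonlocalPotential N s U) (Metric.ball c 1) :=
    integrableOn_ball_integral_norm_sub_rpow N s hN hs hs' c hcompl
  refine ⟨hV, ?_⟩
  have hsplit : Set.univ \ Metric.ball c 1 = U \ Metric.ball c 1 ∪ Uᶜ := by
    ext y
    have := @hc y
    simp only [Set.mem_sdiff, Set.mem_univ, true_and, Set.mem_union, Set.mem_compl_iff]
    tauto
  unfold relPerimeterR
  rw [← integral_sub
    (integrableOn_ball_integral_norm_sub_rpow N s hN hs hs' c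
      Set.disjoint_sdiff_left)
    (integrableOn_ball_integral_norm_sub_rpow N s hN hs hs' c
      Set.disjoint_sdiff_left), ← integral_neg]
  refine setIntegral_congr_fun hball fun x hx ↦ ?_
  rw [Metric.mem_ball, dist_eq_norm] at hx
  have hint : IntegrableOn (fun y ↦ ‖x - y‖ ^ (-((N : ℝ) + 2 * s)))
      (Set.univ \ Metric.ball c 1) :=
    (integral_norm_sub_rpow_compl_ball N hN (q := 2 * s) (r := 1 - ‖x - c‖) (by linarith)
      (by linarith) x).1.mono_set fun y hy ↦ by
        have hy' : 1 ≤ ‖y - c‖ := by simpa [dist_eq_norm] using hy.2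
        have : ‖y - c‖ ≤ ‖x - y‖ + ‖x - c‖ := by
          rw [norm_sub_rev x y]
          simpa using norm_add_le (y - x) (x - c)
        show 1 - ‖x - c‖ ≤ ‖x - y‖
        linarith
  rw [hsplit] at hint ⊢
  simp only [nonlocalPotential]
  rw [setIntegral_union (disjoint_compl_right.mono_left Set.sdiff_subset) hU.compl
    (hint.mono_set Set.subset_union_left) (hint.mono_set Set.subset_union_right)]
  ring

/-- expansion of the relative fractional perimeter of small balls:
`P_s(B_1(x̄), Ω/ε) = P_s(B_1(x̄)) - ω_N ε^{2s} V_Ω(ε x̄) + O(ε^{1+2s})`, uniformly for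
`ε x̄` in a compact subset `Θ` of `Ω`. -/
theorem relPerimeter_small_ball_expansion
    (hN : 0 < N) (hs : 0 < s) (hs' : s < 1/2)
    (Ω Θ : Set (EuclideanSpace ℝ (Fin N))) (hΩo : IsOpen Ω)
    (hΩb : Bornology.IsBounded Ω) (hΘ : IsCompact Θ) (hΘΩ : Θ ⊆ Ω) :
    ∃ C > 0, ∃ ε₀ > 0, ∀ ε : ℝ, 0 < ε → ε < ε₀ →
      ∀ xb : EuclideanSpace ℝ (Fin N), ε • xb ∈ Θ →
        |relPerimeterR N s (Metric.ball xb 1) (ε⁻¹ • Ω) -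
            relPerimeterR N s (Metric.ball xb 1) Set.univ +
            (volume (Metric.ball (0 : EuclideanSpace ℝ (Fin N)) 1)).toReal *
              ε ^ (2*s) * nonlocalPotential N s Ω (ε • xb)| ≤
          C * ε ^ (1 + 2*s) := by
  obtain ⟨δ, hδ, hδΩ⟩ := hΘ.exists_thickening_subset_open hΩo hΘΩ
  set ω := volume.real (Metric.ball (0 : EuclideanSpace ℝ (Fin N)) 1) with hω
  set K := (N + 2 * s) * 2 ^ ((N : ℝ) + 2 * s + 1) * (N * ω / (1 + 2 * s) * δ ^ (-(1 + 2 * s)))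
    with hK
  have hK₀ : 0 ≤ K := by positivity
  refine ⟨K * ω + 1, by positivity, δ / 2, by positivity, fun ε hε hεδ xb hxb ↦ ?_⟩
  have hR : 2 ≤ δ / ε := by
    rw [le_div_iff₀ hε]
    linarith
  have hU : MeasurableSet (ε⁻¹ • Ω) := (hΩo.smul₀ (inv_ne_zero hε.ne')).measurableSet
  have hfar : ∀ y ∈ (ε⁻¹ • Ω)ᶜ, δ / ε ≤ ‖xb - y‖ := by
    intro y hy
    rw [Set.mem_compl_iff, Set.mem_inv_smul_set_iff₀ hε.ne'] at hy
    by_contra! hlt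
    refine hy (hδΩ (Metric.mem_thickening_iff.2 ⟨ε • xb, hxb, ?_⟩))
    rw [dist_comm, dist_eq_norm, ← smul_sub, norm_smul, Real.norm_of_nonneg hε.le, mul_comm]
    exact (lt_div_iff₀ hε).1 hlt
  have hsub : Metric.ball xb 1 ⊆ ε⁻¹ • Ω := by
    intro y hy
    by_contra hy'
    rw [Metric.mem_ball, dist_comm, dist_eq_norm] at hy
    linarith [hfar y hy']
  obtain ⟨hint, hdiff⟩ := relPerimeterR_ball_sub_univ N s hN hs hs' hU hsub
  have hvol : volume.real (Metric.ball xb 1) = ω := by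
    rw [hω, measureReal_def, measureReal_def, Measure.addHaar_ball_center]
  have hconst : (volume (Metric.ball (0 : EuclideanSpace ℝ (Fin N)) 1)).toReal * ε ^ (2 * s) *
      nonlocalPotential N s Ω (ε • xb) =
      ∫ _ in Metric.ball xb 1, nonlocalPotential N s (ε⁻¹ • Ω) xb := by
    rw [setIntegral_const, hvol, smul_eq_mul, nonlocalPotential_inv_smul N s hε, mul_assoc, hω,
      measureReal_def]
  have hKε : (N + 2 * s) * 2 ^ ((N : ℝ) + 2 * s + 1) *
      (N * ω / (1 + 2 * s) * (δ / ε) ^ (-(1 + 2 * s))) = K * ε ^ (1 + 2 * s) := by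
    rw [Real.div_rpow hδ.le hε.le, Real.rpow_neg hε.le, div_inv_eq_mul, hK]
    ring
  have hfin : volume (Metric.ball xb 1) < ⊤ := measure_ball_lt_top
  have hbound := norm_setIntegral_le_of_norm_le_const hfin (C := K * ε ^ (1 + 2 * s))
    (f := fun x ↦ nonlocalPotential N s (ε⁻¹ • Ω) x - nonlocalPotential N s (ε⁻¹ • Ω) xb)
    fun x hx ↦ by
      rw [Metric.mem_ball, dist_eq_norm] at hx
      exact (abs_nonlocalPotential_sub_le N s hN hs hU hR hfar hx.le).trans_eq hKε
  rw [integral_sub hint (integrableOn_const hfin.ne), hvol, Real.norm_eq_abs, abs_sub_comm]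
    at hbound
  rw [hdiff, hconst, neg_add_eq_sub]
  refine hbound.trans ?_
  have : 0 < ε ^ (1 + 2 * s) := by positivity
  nlinarith
end

section
/- Fractional isoperimetric inequality (statement): for every measurable E ⊂ ℝ^N with 0 < |E| < ∞ and s ∈ (0,1/2), P_s(E) ≥ P_s(B_1) |B_1|^{−(N−2s)/N} |E|^{(N−2s)/N}, i.e. among sets of given volume, balls minimize the fractional s-perimeter. -/
open MeasureTheory ENNReal

/-- The fractional `s`-perimeter `P_s(E) = ∫_E ∫_{Eᶜ} |x-y|^{-(N+2s)} dx dy`. -/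
noncomputable def fracPerimeter (N : ℕ) (s : ℝ) (E : Set (EuclideanSpace ℝ (Fin N))) :
    ℝ≥0∞ :=
  ∫⁻ x in E, ∫⁻ y in Eᶜ, ENNReal.ofReal (‖x - y‖ ^ (-((N : ℝ) + 2*s)))

open Set Metric
open scoped NNReal InnerProductSpace

section Reflection

variable {V : Type*} [NormedAddCommGroup V] [InnerProductSpace ℝ V]

/-- The affine function `x ↦ ‖p‖² - 2⟪x, p⟫`, which vanishes on the perpendicular bisector of the
segment from `0` to `p` and is nonnegative on the side containing `0`. -/
def bisectorHeight (p x : V) : ℝ := ‖p‖ ^ 2 - 2 * ⟪x, p⟫_ℝ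

/-- The reflection in the perpendicular bisector of the segment from `0` to `p`
(the identity when `p = 0`). -/
noncomputable def bisectorReflection (p x : V) : V := x + (bisectorHeight p x / ‖p‖ ^ 2) • p

@[simp] lemma bisectorReflection_zero (x : V) : bisectorReflection 0 x = x := by
  simp [bisectorReflection]

lemma bisectorHeight_reflection (p x : V) :
    bisectorHeight p (bisectorReflection p x) = -bisectorHeight p x := by
  rcases eq_or_ne p 0 with rfl | hp
  · simp [bisectorHeight]
  have hp' : ‖p‖ ≠ 0 := norm_ne_zero_iff.2 hp
  simp only [bisectorReflection, bisectorHeight, inner_add_left, inner_smul_left,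
    real_inner_self_eq_norm_sq, conj_trivial]
  field_simp
  ring

lemma bisectorReflection_involutive (p : V) : Function.Involutive (bisectorReflection p) := by
  intro x
  rw [bisectorReflection, bisectorHeight_reflection, bisectorReflection, neg_div, neg_smul,
    add_neg_cancel_right]

lemma norm_sub_bisectorReflection_sq (p x y : V) :
    ‖x - bisectorReflection p y‖ ^ 2 =
      ‖x - y‖ ^ 2 + bisectorHeight p x * bisectorHeight p y / ‖p‖ ^ 2 := by
  rcases eq_or_ne p 0 with rfl | hp
  · simp
  have hp' : ‖p‖ ≠ 0 := norm_ne_zero_iff.2 hp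
  rw [bisectorReflection, ← sub_sub, norm_sub_sq_real, inner_smul_right, norm_smul, inner_sub_left,
    mul_pow, Real.norm_eq_abs, sq_abs]
  simp only [bisectorHeight]
  field_simp
  ring

lemma norm_bisectorReflection_sq (p x : V) :
    ‖bisectorReflection p x‖ ^ 2 = ‖x‖ ^ 2 + bisectorHeight p x := by
  rcases eq_or_ne p 0 with rfl | hp
  · simp [bisectorHeight]
  have hp' : ‖p‖ ≠ 0 := norm_ne_zero_iff.2 hp
  have h := norm_sub_bisectorReflection_sq p 0 x
  rw [zero_sub, zero_sub, norm_neg, norm_neg] at h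
  rw [h]
  simp only [bisectorHeight, inner_zero_left]
  field_simp
  ring

lemma dist_bisectorReflection_bisectorReflection (p x y : V) :
    dist (bisectorReflection p x) (bisectorReflection p y) = dist x y := by
  rw [dist_eq_norm, dist_eq_norm, ← sq_eq_sq₀ (norm_nonneg _) (norm_nonneg _),
    norm_sub_bisectorReflection_sq, norm_sub_rev, norm_sub_bisectorReflection_sq,
    bisectorHeight_reflection, norm_sub_rev]
  ring

lemma dist_bisectorReflection_left (p x y : V) :
    dist (bisectorReflection p x) y = dist x (bisectorReflection p y) := by
  rw [← dist_bisectorReflection_bisectorReflection p _ y, bisectorReflection_involutive p x]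

lemma dist_le_dist_bisectorReflection {p x y : V}
    (h : 0 ≤ bisectorHeight p x * bisectorHeight p y) :
    dist x y ≤ dist x (bisectorReflection p y) := by
  rw [dist_eq_norm, dist_eq_norm, ← sq_le_sq₀ (norm_nonneg _) (norm_nonneg _),
    norm_sub_bisectorReflection_sq]
  have := div_nonneg h (sq_nonneg ‖p‖)
  linarith

lemma dist_bisectorReflection_le_dist {p x y : V}
    (h : bisectorHeight p x * bisectorHeight p y ≤ 0) :
    dist x (bisectorReflection p y) ≤ dist x y := by
  have := dist_le_dist_bisectorReflection (p := p) (x := x) (y := bisectorReflection p y)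
    (by rw [bisectorHeight_reflection]; linarith)
  rwa [bisectorReflection_involutive] at this

lemma norm_le_norm_bisectorReflection {p x : V} (h : 0 ≤ bisectorHeight p x) :
    ‖x‖ ≤ ‖bisectorReflection p x‖ := by
  rw [← sq_le_sq₀ (norm_nonneg _) (norm_nonneg _), norm_bisectorReflection_sq]
  linarith

lemma norm_bisectorReflection_le_norm {p x : V} (h : bisectorHeight p x ≤ 0) :
    ‖bisectorReflection p x‖ ≤ ‖x‖ := by
  rw [← sq_le_sq₀ (norm_nonneg _) (norm_nonneg _), norm_bisectorReflection_sq]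
  linarith

lemma bisectorReflection_eq_self {p x : V} (h : bisectorHeight p x = 0) :
    bisectorReflection p x = x := by
  simp [bisectorReflection, h]

/-- Any two points at different distances from the origin are exchanged by one of the
reflections. -/
lemma exists_bisectorReflection_eq {x y : V} (h : ‖x‖ < ‖y‖) :
    ∃ p, bisectorReflection p x = y := by
  have hd : y - x ≠ 0 := by
    rw [sub_ne_zero]; rintro rfl; exact lt_irrefl _ h
  have hd' : ‖y - x‖ ≠ 0 := norm_ne_zero_iff.2 hd
  have hl : ‖y‖ ^ 2 - ‖x‖ ^ 2 ≠ 0 := by nlinarith [norm_nonneg x]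
  refine ⟨((‖y‖ ^ 2 - ‖x‖ ^ 2) / ‖y - x‖ ^ 2) • (y - x), ?_⟩
  rw [bisectorReflection, smul_smul]
  suffices hs : bisectorHeight (((‖y‖ ^ 2 - ‖x‖ ^ 2) / ‖y - x‖ ^ 2) • (y - x)) x /
      ‖((‖y‖ ^ 2 - ‖x‖ ^ 2) / ‖y - x‖ ^ 2) • (y - x)‖ ^ 2 *
        ((‖y‖ ^ 2 - ‖x‖ ^ 2) / ‖y - x‖ ^ 2) = 1 by
    rw [hs, one_smul, add_sub_cancel]
  have hi : ⟪x, y - x⟫_ℝ = (‖y‖ ^ 2 - ‖x‖ ^ 2 - ‖y - x‖ ^ 2) / 2 := by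
    rw [norm_sub_sq_real, inner_sub_right, real_inner_self_eq_norm_sq, real_inner_comm]
    ring
  rw [bisectorHeight, norm_smul, mul_pow, Real.norm_eq_abs, sq_abs, inner_smul_right, hi]
  field_simp
  ring

lemma norm_le_of_norm_bisectorReflection_le {p x : V} {a b : ℝ} (hx : ‖x‖ ≤ a)
    (hy : ‖bisectorReflection p x‖ ≤ b) : ‖p‖ ≤ a + b := by
  have h := dist_bisectorReflection_bisectorReflection p x 0
  have h0 : bisectorReflection p 0 = p := by
    rcases eq_or_ne p 0 with rfl | hp
    · simp
    · have hp' : ‖p‖ ≠ 0 := norm_ne_zero_iff.2 hp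
      simp [bisectorReflection, bisectorHeight, hp']
  rw [h0, dist_eq_norm, dist_zero_right] at h
  calc ‖p‖ = ‖bisectorReflection p x - (bisectorReflection p x - p)‖ := by rw [_root_.sub_sub_cancel]
    _ ≤ ‖bisectorReflection p x‖ + ‖bisectorReflection p x - p‖ := norm_sub_le _ _
    _ ≤ a + b := by linarith

lemma norm_bisectorReflection_le (p x : V) : ‖bisectorReflection p x‖ ≤ ‖x‖ + ‖p‖ := by
  rw [← sq_le_sq₀ (norm_nonneg _) (by positivity), norm_bisectorReflection_sq, bisectorHeight]
  nlinarith [neg_le_of_abs_le (abs_real_inner_le_norm x p)]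

lemma norm_inv_norm_smul_sub_le {η : ℝ} (hη : 0 < η) {p q : V} (hp : η ≤ ‖p‖) (hq : η ≤ ‖q‖) :
    ‖‖p‖⁻¹ • p - ‖q‖⁻¹ • q‖ ≤ 2 / η * ‖p - q‖ := by
  have hp0 : 0 < ‖p‖ := hη.trans_le hp
  have hq0 : 0 < ‖q‖ := hη.trans_le hq
  have key : ‖p‖⁻¹ • p - ‖q‖⁻¹ • q = ‖p‖⁻¹ • (p - q) + ((‖q‖ - ‖p‖) / (‖p‖ * ‖q‖)) • q := by
    have : (‖q‖ - ‖p‖) / (‖p‖ * ‖q‖) = ‖p‖⁻¹ - ‖q‖⁻¹ := by field_simp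
    rw [this, smul_sub, sub_smul]
    abel
  have h1 : |‖q‖ - ‖p‖| ≤ ‖p - q‖ := by
    rw [norm_sub_rev]; exact abs_norm_sub_norm_le q p
  calc ‖‖p‖⁻¹ • p - ‖q‖⁻¹ • q‖
      ≤ ‖‖p‖⁻¹ • (p - q)‖ + ‖((‖q‖ - ‖p‖) / (‖p‖ * ‖q‖)) • q‖ := key ▸ norm_add_le _ _
    _ = ‖p - q‖ / ‖p‖ + |‖q‖ - ‖p‖| / ‖p‖ := by
        rw [norm_smul, norm_smul, Real.norm_eq_abs, Real.norm_eq_abs, abs_div, abs_inv, abs_norm,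
          abs_mul, abs_norm, abs_norm]
        field_simp
    _ ≤ ‖p - q‖ / η + ‖p - q‖ / η := by gcongr
    _ = 2 / η * ‖p - q‖ := by ring

lemma lipschitzOnWith_bisectorReflection {η ρ : ℝ} (hη : 0 < η) (hρ : 0 ≤ ρ) {x : V}
    (hx : ‖x‖ ≤ ρ) :
    LipschitzOnWith (1 + 8 * ρ / η).toNNReal (fun p ↦ bisectorReflection p x) {p | η ≤ ‖p‖} := by
  refine LipschitzOnWith.of_dist_le_mul fun p hp q hq ↦ ?_
  rw [mem_ofPred_eq] at hp hq
  rw [Real.coe_toNNReal _ (by positivity), dist_eq_norm, dist_eq_norm]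
  have form : ∀ r : V, η ≤ ‖r‖ →
      bisectorReflection r x = x + r - (2 * ⟪x, ‖r‖⁻¹ • r⟫_ℝ) • (‖r‖⁻¹ • r) := by
    intro r hr
    have : ‖r‖ ≠ 0 := (hη.trans_le hr).ne'
    rw [bisectorReflection, bisectorHeight, sub_div, div_self (pow_ne_zero 2 this), sub_smul,
      one_smul, inner_smul_right, smul_smul, add_sub_assoc]
    congr 3
    field_simp
  have unit : ∀ r : V, η ≤ ‖r‖ → ‖‖r‖⁻¹ • r‖ = 1 := by
    intro r hr
    rw [norm_smul, norm_inv, norm_norm, inv_mul_cancel₀ (hη.trans_le hr).ne']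
  rw [form p hp, form q hq]
  have hu := unit p hp
  have hv := unit q hq
  have huv := norm_inv_norm_smul_sub_le hη hp hq
  set u := ‖p‖⁻¹ • p
  set v := ‖q‖⁻¹ • q
  have e : x + p - (2 * ⟪x, u⟫_ℝ) • u - (x + q - (2 * ⟪x, v⟫_ℝ) • v) =
      (p - q) - ((2 * ⟪x, u - v⟫_ℝ) • u + (2 * ⟪x, v⟫_ℝ) • (u - v)) := by
    rw [inner_sub_right]
    module
  rw [e]
  have h1 : ‖(2 * ⟪x, u - v⟫_ℝ) • u‖ ≤ 2 * (ρ * ‖u - v‖) := by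
    rw [norm_smul, hu, mul_one, norm_mul, Real.norm_two]
    gcongr
    exact (norm_inner_le_norm _ _).trans (by gcongr)
  have h2 : ‖(2 * ⟪x, v⟫_ℝ) • (u - v)‖ ≤ 2 * (ρ * ‖u - v‖) := by
    rw [norm_smul, norm_mul, Real.norm_two, mul_assoc]
    gcongr
    exact (norm_inner_le_norm _ _).trans (by rw [hv, mul_one]; exact hx)
  calc _ ≤ ‖p - q‖ + (2 * (ρ * ‖u - v‖) + 2 * (ρ * ‖u - v‖)) :=
        (norm_sub_le _ _).trans (by gcongr; exact (norm_add_le _ _).trans (by gcongr))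
    _ ≤ ‖p - q‖ + (2 * (ρ * (2 / η * ‖p - q‖)) + 2 * (ρ * (2 / η * ‖p - q‖))) := by gcongr
    _ = _ := by ring

end Reflection

section Polarization

/-- Comparison of the measures of two sets by averaging over finitely many measure-preserving
maps. -/
lemma measure_le_of_sum_indicator_le {α ι : Type*} [Fintype ι] [Nonempty ι] [MeasurableSpace α]
    {μ : Measure α} {τ : ι → α → α} (hτ : ∀ i, MeasurePreserving (τ i) μ μ) {A B : Set α}
    (hA : MeasurableSet A) (hB : MeasurableSet B)
    (h : ∀ x, ∑ i, A.indicator (1 : α → ℝ≥0∞) (τ i x) ≤ ∑ i, B.indicator 1 (τ i x)) :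
    μ A ≤ μ B := by
  have key : ∀ S : Set α, MeasurableSet S →
      ∫⁻ x, ∑ i, S.indicator (1 : α → ℝ≥0∞) (τ i x) ∂μ = Fintype.card ι * μ S := by
    intro S hS
    have hm : Measurable (S.indicator (1 : α → ℝ≥0∞)) := measurable_one.indicator hS
    rw [lintegral_finsetSum _ fun i _ ↦ by exact hm.comp (hτ i).measurable]
    simp [(hτ _).lintegral_comp hm, lintegral_indicator_one hS]
  have := lintegral_mono (μ := μ) h
  rw [key A hA, key B hB] at this
  exact (ENNReal.mul_le_mul_iff_right (by simp) (by simp)).1 this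

/-- The pairs of points of `F` at distance less than `r`. -/
def closePairs {X : Type*} [Dist X] (r : ℝ) (F : Set X) : Set (X × X) :=
  {z | z.1 ∈ F ∧ z.2 ∈ F ∧ dist z.1 z.2 < r}

lemma closePairs_mono {X : Type*} [Dist X] (r : ℝ) {F G : Set X} (h : F ⊆ G) :
    closePairs r F ⊆ closePairs r G :=
  fun _ hz ↦ ⟨h hz.1, h hz.2.1, hz.2.2⟩

variable {V : Type*} [NormedAddCommGroup V] [InnerProductSpace ℝ V]

/-- The polarization (two-point symmetrization) of `F` with respect to the perpendicular bisector
of the segment from `0` to `p`, moving mass towards the side of the origin. -/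
def polarization (p : V) (F : Set V) : Set V :=
  {x | (x ∈ F ∧ bisectorReflection p x ∈ F) ∨
    (0 ≤ bisectorHeight p x ∧ (x ∈ F ∨ bisectorReflection p x ∈ F))}

lemma mem_polarization_of_nonneg {p x : V} {F : Set V} (h : 0 ≤ bisectorHeight p x) :
    (x ∈ polarization p F ↔ x ∈ F ∨ bisectorReflection p x ∈ F) ∧
      (bisectorReflection p x ∈ polarization p F ↔ x ∈ F ∧ bisectorReflection p x ∈ F) := by
  rcases h.eq_or_lt with h0 | h0
  · simp [polarization, bisectorReflection_eq_self h0.symm, h0.symm]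
  · simp only [polarization, mem_ofPred_eq, bisectorHeight_reflection,
      bisectorReflection_involutive p x, h, neg_nonneg, not_le.2 h0]
    tauto

lemma mem_polarization_of_nonpos {p x : V} {F : Set V} (h : bisectorHeight p x ≤ 0) :
    (x ∈ polarization p F ↔ x ∈ F ∧ bisectorReflection p x ∈ F) ∧
      (bisectorReflection p x ∈ polarization p F ↔ x ∈ F ∨ bisectorReflection p x ∈ F) := by
  have := mem_polarization_of_nonneg (F := F) (p := p) (x := bisectorReflection p x)
    (by rw [bisectorHeight_reflection]; linarith)
  rw [bisectorReflection_involutive p x, or_comm, and_comm (a := bisectorReflection p x ∈ F)] at this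
  exact this.symm

lemma polarization_subset_closedBall {p : V} {F : Set V} {R : ℝ} (hF : F ⊆ closedBall 0 R) :
    polarization p F ⊆ closedBall 0 R := by
  rintro x (⟨hx, -⟩ | ⟨h, hx | hx⟩)
  · exact hF hx
  · exact hF hx
  · have := hF hx
    rw [mem_closedBall_zero_iff] at this ⊢
    exact (norm_le_norm_bisectorReflection h).trans this

variable [FiniteDimensional ℝ V] [MeasurableSpace V] [BorelSpace V]

lemma measurable_bisectorHeight : Measurable fun z : V × V ↦ bisectorHeight z.1 z.2 := by
  unfold bisectorHeight
  fun_prop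

lemma measurable_bisectorReflection : Measurable fun z : V × V ↦ bisectorReflection z.1 z.2 := by
  have := measurable_bisectorHeight (V := V)
  unfold bisectorReflection
  fun_prop

lemma measurePreserving_bisectorReflection (p : V) :
    MeasurePreserving (bisectorReflection p) volume volume := by
  let e : V ≃ᵢ V := IsometryEquiv.mk (bisectorReflection_involutive p).toPerm
    (Isometry.of_dist_eq (dist_bisectorReflection_bisectorReflection p))
  let L := e.toRealAffineIsometryEquiv.linearIsometryEquiv
  have h : bisectorReflection p = (fun x ↦ x + bisectorReflection p 0) ∘ L := by
    ext x
    have := e.toRealAffineIsometryEquiv.map_vadd 0 x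
    simpa [e] using this
  rw [h]
  exact (measurePreserving_add_right volume _).comp L.measurePreserving

lemma measurableSet_polarization {p : V} {F : Set V} (hF : MeasurableSet F) :
    MeasurableSet (polarization p F) := by
  have h1 : MeasurableSet (bisectorReflection p ⁻¹' F) :=
    (measurePreserving_bisectorReflection p).measurable hF
  have h2 : MeasurableSet {x : V | 0 ≤ bisectorHeight p x} :=
    measurableSet_le measurable_const (measurable_bisectorHeight.comp measurable_prodMk_left)
  exact (hF.inter h1).union (h2.inter (hF.union h1))

lemma measurePreserving_id_bisectorReflection (p : V) (i : Bool) :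
    MeasurePreserving (bif i then bisectorReflection p else id) volume volume := by
  cases i
  · exact MeasurePreserving.id _
  · exact measurePreserving_bisectorReflection p

lemma volume_polarization {p : V} {F : Set V} (hF : MeasurableSet F) :
    volume (polarization p F) = volume F := by
  classical
  have key : ∀ x, ∑ i : Bool, (polarization p F).indicator (1 : V → ℝ≥0∞)
        ((bif i then bisectorReflection p else id) x) =
      ∑ i : Bool, F.indicator (1 : V → ℝ≥0∞) ((bif i then bisectorReflection p else id) x) := by
    intro x
    simp only [Fintype.sum_bool, cond_true, cond_false, id, indicator_apply, Pi.one_apply]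
    rcases le_total 0 (bisectorHeight p x) with h | h
    · simp only [(mem_polarization_of_nonneg h).1, (mem_polarization_of_nonneg h).2]
      by_cases h1 : x ∈ F <;> by_cases h2 : bisectorReflection p x ∈ F <;> simp [h1, h2]
    · simp only [(mem_polarization_of_nonpos h).1, (mem_polarization_of_nonpos h).2]
      by_cases h1 : x ∈ F <;> by_cases h2 : bisectorReflection p x ∈ F <;> simp [h1, h2]
  have hP := measurableSet_polarization (p := p) hF
  exact le_antisymm
    (measure_le_of_sum_indicator_le (measurePreserving_id_bisectorReflection p) hP hF
      fun x ↦ (key x).le)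
    (measure_le_of_sum_indicator_le (measurePreserving_id_bisectorReflection p) hF hP
      fun x ↦ (key x).ge)

/-- Polarization increases the overlap with a centred ball, by at least the measure of the set of
points of the ball outside `F` whose reflections lie in `F` but not in the ball. -/
lemma volume_inter_ball_add_le_polarization {p : V} {F : Set V} (hF : MeasurableSet F) (ρ : ℝ) :
    volume (F ∩ ball 0 ρ) + volume {x ∈ ball 0 ρ \ F | bisectorReflection p x ∈ F \ ball 0 ρ} ≤
      volume (polarization p F ∩ ball 0 ρ) := by
  classical
  have hG : MeasurableSet {x ∈ ball 0 ρ \ F | bisectorReflection p x ∈ F \ ball 0 ρ} :=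
    (measurableSet_ball.diff hF).inter
      ((measurePreserving_bisectorReflection p).measurable (hF.diff measurableSet_ball))
  rw [← measure_union _ hG]
  · refine measure_le_of_sum_indicator_le (measurePreserving_id_bisectorReflection p)
      ((hF.inter measurableSet_ball).union hG)
      ((measurableSet_polarization hF).inter measurableSet_ball) fun x ↦ ?_
    simp only [Fintype.sum_bool, cond_true, cond_false, id, indicator_apply, Pi.one_apply,
      mem_union, mem_inter_iff, mem_ofPred_eq, mem_sdiff, bisectorReflection_involutive p x,
      mem_ball_zero_iff]
    rcases le_total 0 (bisectorHeight p x) with h | h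
    · simp only [(mem_polarization_of_nonneg h).1, (mem_polarization_of_nonneg h).2]
      have hn : ‖bisectorReflection p x‖ < ρ → ‖x‖ < ρ :=
        (norm_le_norm_bisectorReflection h).trans_lt
      by_cases h1 : x ∈ F <;> by_cases h2 : bisectorReflection p x ∈ F <;>
        by_cases h3 : ‖x‖ < ρ <;> by_cases h4 : ‖bisectorReflection p x‖ < ρ <;>
        simp_all [-not_lt]
    · simp only [(mem_polarization_of_nonpos h).1, (mem_polarization_of_nonpos h).2]
      have hn : ‖x‖ < ρ → ‖bisectorReflection p x‖ < ρ :=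
        (norm_bisectorReflection_le_norm h).trans_lt
      by_cases h1 : x ∈ F <;> by_cases h2 : bisectorReflection p x ∈ F <;>
        by_cases h3 : ‖x‖ < ρ <;> by_cases h4 : ‖bisectorReflection p x‖ < ρ <;>
        simp_all [-not_lt]
  · exact disjoint_left.2 fun x hx hx' ↦ hx'.1.2 hx.1

lemma measurableSet_dist_lt (r : ℝ) : MeasurableSet {z : V × V | dist z.1 z.2 < r} :=
  measurableSet_lt measurable_dist measurable_const

lemma measurableSet_closePairs (r : ℝ) {F : Set V} (hF : MeasurableSet F) :
    MeasurableSet (closePairs r F) :=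
  (measurable_fst hF).inter ((measurable_snd hF).inter (measurableSet_dist_lt r))

/-- Polarization increases the measure of the set of close pairs. -/
lemma volume_closePairs_le_polarization (r : ℝ) {p : V} {F : Set V} (hF : MeasurableSet F) :
    volume (closePairs r F) ≤ volume (closePairs r (polarization p F)) := by
  classical
  refine measure_le_of_sum_indicator_le (ι := Bool × Bool)
    (τ := fun i ↦ Prod.map (bif i.1 then bisectorReflection p else id)
      (bif i.2 then bisectorReflection p else id))
    (fun i ↦ (measurePreserving_id_bisectorReflection p i.1).prod
      (measurePreserving_id_bisectorReflection p i.2))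
    (measurableSet_closePairs r hF)
    (measurableSet_closePairs r (measurableSet_polarization hF)) fun z ↦ ?_
  obtain ⟨x, y⟩ := z
  simp only [Fintype.sum_prod_type, Fintype.sum_bool, cond_true, cond_false, id, indicator_apply,
    Pi.one_apply, closePairs, mem_ofPred_eq, Prod.map_apply,
    dist_bisectorReflection_left, bisectorReflection_involutive p y]
  have same : 0 ≤ bisectorHeight p x * bisectorHeight p y → dist x (bisectorReflection p y) < r →
      dist x y < r := fun h ↦ (dist_le_dist_bisectorReflection h).trans_lt
  have opp : bisectorHeight p x * bisectorHeight p y ≤ 0 → dist x y < r →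
      dist x (bisectorReflection p y) < r := fun h ↦ (dist_bisectorReflection_le_dist h).trans_lt
  rcases le_total 0 (bisectorHeight p x) with hx | hx <;>
    rcases le_total 0 (bisectorHeight p y) with hy | hy
  · simp only [(mem_polarization_of_nonneg hx).1, (mem_polarization_of_nonneg hx).2,
      (mem_polarization_of_nonneg hy).1, (mem_polarization_of_nonneg hy).2]
    replace same := same (mul_nonneg hx hy)
    clear opp hx hy
    by_cases h1 : x ∈ F <;> by_cases h2 : bisectorReflection p x ∈ F <;>
      by_cases h3 : y ∈ F <;> by_cases h4 : bisectorReflection p y ∈ F <;>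
      by_cases h5 : dist x (bisectorReflection p y) < r <;> by_cases h6 : dist x y < r <;>
      simp_all [-not_lt]
  · simp only [(mem_polarization_of_nonneg hx).1, (mem_polarization_of_nonneg hx).2,
      (mem_polarization_of_nonpos hy).1, (mem_polarization_of_nonpos hy).2]
    replace opp := opp (mul_nonpos_of_nonneg_of_nonpos hx hy)
    clear same hx hy
    by_cases h1 : x ∈ F <;> by_cases h2 : bisectorReflection p x ∈ F <;>
      by_cases h3 : y ∈ F <;> by_cases h4 : bisectorReflection p y ∈ F <;>
      by_cases h5 : dist x (bisectorReflection p y) < r <;> by_cases h6 : dist x y < r <;>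
      simp_all [-not_lt]
  · simp only [(mem_polarization_of_nonpos hx).1, (mem_polarization_of_nonpos hx).2,
      (mem_polarization_of_nonneg hy).1, (mem_polarization_of_nonneg hy).2]
    replace opp := opp (mul_nonpos_of_nonpos_of_nonneg hx hy)
    clear same hx hy
    by_cases h1 : x ∈ F <;> by_cases h2 : bisectorReflection p x ∈ F <;>
      by_cases h3 : y ∈ F <;> by_cases h4 : bisectorReflection p y ∈ F <;>
      by_cases h5 : dist x (bisectorReflection p y) < r <;> by_cases h6 : dist x y < r <;>
      simp_all [-not_lt]
  · simp only [(mem_polarization_of_nonpos hx).1, (mem_polarization_of_nonpos hx).2,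
      (mem_polarization_of_nonpos hy).1, (mem_polarization_of_nonpos hy).2]
    replace same := same (mul_nonneg_of_nonpos_of_nonpos hx hy)
    clear opp hx hy
    by_cases h1 : x ∈ F <;> by_cases h2 : bisectorReflection p x ∈ F <;>
      by_cases h3 : y ∈ F <;> by_cases h4 : bisectorReflection p y ∈ F <;>
      by_cases h5 : dist x (bisectorReflection p y) < r <;> by_cases h6 : dist x y < r <;>
      simp_all [-not_lt]

end Polarization

section Symmetrization

lemma ENNReal.le_of_forall_pos_le_add_mul {a b K : ℝ≥0∞} (hK : K ≠ ⊤)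
    (h : ∀ δ : ℝ≥0∞, 0 < δ → a ≤ b + K * δ) : a ≤ b := by
  have ht : Filter.Tendsto (fun δ : ℝ≥0∞ ↦ b + K * δ) (nhdsWithin 0 (Ioi 0)) (nhds (b + K * 0)) :=
    ((ENNReal.continuous_const_mul hK).const_add b).continuousAt.tendsto.mono_left
      nhdsWithin_le_nhds
  rw [mul_zero, add_zero] at ht
  exact ge_of_tendsto ht (eventually_mem_nhdsWithin.mono h)

variable {V : Type*} [NormedAddCommGroup V] [InnerProductSpace ℝ V]
  [FiniteDimensional ℝ V] [MeasurableSpace V] [BorelSpace V]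

lemma LipschitzOnWith.volume_image_le {K : ℝ≥0} {f : V → V} {s : Set V}
    (hf : LipschitzOnWith K f s) :
    volume (f '' s) ≤ (K : ℝ≥0∞) ^ Module.finrank ℝ V * volume s := by
  have h := hf.hausdorffMeasure_image_le (d := Module.finrank ℝ V) (by positivity)
  rw [ENNReal.rpow_natCast] at h
  rw [Measure.isAddLeftInvariant_eq_smul volume (μH[Module.finrank ℝ V] : Measure V),
    Measure.smul_apply, Measure.smul_apply, ENNReal.smul_def, smul_eq_mul, ENNReal.smul_def, smul_eq_mul,
    mul_left_comm]
  gcongr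

/-- Two sets separated by a sphere around the origin are matched by one of the reflections on a set
whose measure is bounded from below. -/
lemma exists_volume_bisectorReflection_mem_ge [Nontrivial V] {ρ R : ℝ} (hρ : 0 ≤ ρ) {ε : ℝ≥0∞}
    (hε : ε ≠ 0) (hε' : ε ≠ ⊤) :
    ∃ c : ℝ≥0∞, c ≠ 0 ∧ ∀ A C : Set V, MeasurableSet A → MeasurableSet C → A ⊆ ball 0 ρ →
      C ⊆ closedBall 0 R \ ball 0 ρ → ε ≤ volume A → ε ≤ volume C →
        ∃ p, c ≤ volume {x ∈ A | bisectorReflection p x ∈ C} := by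
  obtain ⟨η, hη, hηε⟩ : ∃ η : ℝ, 0 < η ∧
      volume (ball (0 : V) (ρ + η)) < volume (ball (0 : V) ρ) + ε / 2 := by
    have ht : Filter.Tendsto (fun η : ℝ ↦ ENNReal.ofReal ((ρ + η) ^ Module.finrank ℝ V) *
        volume (ball (0 : V) 1)) (nhdsWithin 0 (Ioi 0))
        (nhds (ENNReal.ofReal ((ρ + 0) ^ Module.finrank ℝ V) * volume (ball (0 : V) 1))) := by
      refine ENNReal.Tendsto.mul_const ?_ (Or.inr measure_ball_lt_top.ne)
      refine Filter.Tendsto.mono_left (Continuous.tendsto ?_ 0) nhdsWithin_le_nhds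
      exact ENNReal.continuous_ofReal.comp (by fun_prop)
    rw [add_zero, ← Measure.addHaar_ball volume 0 hρ] at ht
    have hlt := ht.eventually_lt_const
      (ENNReal.lt_add_right measure_ball_lt_top.ne (ENNReal.half_pos hε).ne')
    obtain ⟨η, h1, h2⟩ := (hlt.and eventually_mem_nhdsWithin).exists
    rw [mem_Ioi] at h2
    exact ⟨η, h2, by rwa [Measure.addHaar_ball volume 0 (by positivity)]⟩
  set K : ℝ≥0 := (1 + 8 * ρ / η).toNNReal
  have hK : K ≠ 0 := (Real.toNNReal_pos.2 (by positivity)).ne'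
  set k : ℝ≥0∞ := (K : ℝ≥0∞) ^ Module.finrank ℝ V
  have hk : k ≠ 0 := pow_ne_zero _ (by simpa using hK)
  have hk' : k ≠ ⊤ := ENNReal.pow_ne_top (by simp)
  set D : Set V := closedBall 0 (ρ + R)
  have hD : volume D + 1 ≠ ⊤ := by simp [D, measure_closedBall_lt_top.ne]
  have hX : ε / 2 / k * ε ≠ 0 :=
    mul_ne_zero (ENNReal.div_pos (ENNReal.half_pos hε).ne' hk').ne' hε
  have hX' : ε / 2 / k * ε ≠ ⊤ :=
    ENNReal.mul_ne_top (ENNReal.div_ne_top (ENNReal.div_ne_top hε' (by simp)) hk) hε'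
  refine ⟨ε / 2 / k * ε / 2 / (volume D + 1), (ENNReal.div_pos (ENNReal.half_pos hX).ne' hD).ne',
    fun A C hA hC hAρ hCR hAε hCε ↦ ?_⟩
  set C' := C \ ball 0 (ρ + η)
  have hC' : MeasurableSet C' := hC.diff measurableSet_ball
  have hC'ε : ε / 2 ≤ volume C' := by
    have h1 : volume (ball (0 : V) (ρ + η) \ ball 0 ρ) ≤ ε / 2 := by
      rw [measure_sdiff (ball_subset_ball (by linarith)) measurableSet_ball.nullMeasurableSet
        measure_ball_lt_top.ne]
      exact tsub_le_iff_left.2 hηε.le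
    have h2 : C ⊆ C' ∪ (ball 0 (ρ + η) \ ball 0 ρ) := by
      intro x hx
      by_cases hx' : x ∈ ball 0 (ρ + η)
      · exact Or.inr ⟨hx', (hCR hx).2⟩
      · exact Or.inl ⟨hx, hx'⟩
    have h3 : ε ≤ volume C' + ε / 2 :=
      hCε.trans ((measure_mono h2).trans ((measure_union_le _ _).trans (by gcongr)))
    rw [← ENNReal.sub_half hε']
    exact tsub_le_iff_right.2 h3
  have hsec : ∀ x ∈ A, ε / 2 / k ≤ volume {p ∈ D | bisectorReflection p x ∈ C'} := by
    intro x hx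
    have hxρ : ‖x‖ < ρ := mem_ball_zero_iff.1 (hAρ hx)
    have hsub : C' ⊆ (fun p ↦ bisectorReflection p x) ''
        {p ∈ D | bisectorReflection p x ∈ C'} := by
      intro y hy
      have hyρ : ρ + η ≤ ‖y‖ := by simpa using hy.2
      obtain ⟨p, rfl⟩ := exists_bisectorReflection_eq (x := x) (y := y) (by linarith)
      refine ⟨p, ⟨?_, hy⟩, rfl⟩
      exact mem_closedBall_zero_iff.2 (norm_le_of_norm_bisectorReflection_le hxρ.le
        (mem_closedBall_zero_iff.1 (hCR hy.1).1))
    have hlip := (lipschitzOnWith_bisectorReflection hη hρ hxρ.le).mono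
      (s := {p ∈ D | bisectorReflection p x ∈ C'}) (by
        rintro p ⟨-, hp⟩
        have hyρ : ρ + η ≤ ‖bisectorReflection p x‖ := by simpa using hp.2
        have := norm_bisectorReflection_le p x
        rw [mem_ofPred_eq]
        linarith)
    rw [ENNReal.div_le_iff' hk hk']
    exact hC'ε.trans ((measure_mono hsub).trans hlip.volume_image_le)
  by_contra! hcon
  let S : Set (V × V) := {z | z.1 ∈ A ∧ z.2 ∈ D ∧ bisectorReflection z.2 z.1 ∈ C'}
  have hS : MeasurableSet S := (measurable_fst hA).inter
    ((measurable_snd measurableSet_closedBall).inter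
      ((measurable_bisectorReflection.comp measurable_swap) hC'))
  have lower : ε / 2 / k * ε ≤ (volume.prod volume) S := by
    rw [Measure.prod_apply hS]
    calc ε / 2 / k * ε ≤ ε / 2 / k * volume A := by gcongr
      _ = ∫⁻ _ in A, ε / 2 / k := by rw [setLIntegral_const]
      _ ≤ ∫⁻ x in A, volume (Prod.mk x ⁻¹' S) := by
          refine setLIntegral_mono' hA fun x hx ↦ (hsec x hx).trans (measure_mono ?_)
          exact fun p hp ↦ ⟨hx, hp.1, hp.2⟩
      _ ≤ _ := setLIntegral_le_lintegral _ _
  have upper : (volume.prod volume) S ≤ ε / 2 / k * ε / 2 := by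
    rw [Measure.prod_apply_symm hS]
    calc ∫⁻ p, volume ((fun x ↦ (x, p)) ⁻¹' S)
        ≤ ∫⁻ p, D.indicator (fun _ ↦ ε / 2 / k * ε / 2 / (volume D + 1)) p := by
          refine lintegral_mono fun p ↦ ?_
          by_cases hp : p ∈ D
          · rw [indicator_of_mem hp]
            have hsub : (fun x ↦ (x, p)) ⁻¹' S ⊆ {x ∈ A | bisectorReflection p x ∈ C} :=
              fun x hx ↦ ⟨hx.1, hx.2.2.1⟩
            exact (measure_mono hsub).trans (hcon p).le
          · have : (fun x ↦ (x, p)) ⁻¹' S = ∅ := eq_empty_of_forall_notMem fun x hx ↦ hp hx.2.1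
            simp [this]
      _ = ε / 2 / k * ε / 2 / (volume D + 1) * volume D :=
          lintegral_indicator_const measurableSet_closedBall _
      _ ≤ ε / 2 / k * ε / 2 / (volume D + 1) * (volume D + 1) := by gcongr; exact le_self_add
      _ = ε / 2 / k * ε / 2 := ENNReal.div_mul_cancel (by simp) hD
  exact (ENNReal.half_lt_self hX hX').not_ge (lower.trans upper)

lemma volume_fst_mem_dist_lt (r : ℝ) {S : Set V} (hS : MeasurableSet S) :
    volume {z : V × V | z.1 ∈ S ∧ dist z.1 z.2 < r} = volume (ball (0 : V) r) * volume S := by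
  have hm : MeasurableSet {z : V × V | z.1 ∈ S ∧ dist z.1 z.2 < r} :=
    (measurable_fst hS).inter (measurableSet_dist_lt r)
  have hsec : ∀ x : V, volume (Prod.mk x ⁻¹' {z : V × V | z.1 ∈ S ∧ dist z.1 z.2 < r}) =
      S.indicator (fun _ ↦ volume (ball (0 : V) r)) x := by
    intro x
    by_cases hx : x ∈ S
    · rw [indicator_of_mem hx, ← Measure.addHaar_ball_center volume x r]
      congr 1
      ext y
      simp [hx, dist_comm]
    · simp [hx]
  rw [Measure.volume_eq_prod, Measure.prod_apply hm]
  simp_rw [hsec]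
  exact lintegral_indicator_const hS _

lemma volume_snd_mem_dist_lt (r : ℝ) {S : Set V} (hS : MeasurableSet S) :
    volume {z : V × V | z.2 ∈ S ∧ dist z.1 z.2 < r} = volume (ball (0 : V) r) * volume S := by
  have hm : MeasurableSet {z : V × V | z.1 ∈ S ∧ dist z.1 z.2 < r} :=
    (measurable_fst hS).inter (measurableSet_dist_lt r)
  rw [← volume_fst_mem_dist_lt r hS, Measure.volume_eq_prod,
    ← Measure.measurePreserving_swap.measure_preimage hm.nullMeasurableSet]
  congr 1
  ext z
  simp [dist_comm]

lemma volume_closePairs_le_add (r : ℝ) {F G : Set V} (hF : MeasurableSet F)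
    (hG : MeasurableSet G) :
    volume (closePairs r F) ≤
      volume (closePairs r G) + 2 * volume (ball (0 : V) r) * volume (F \ G) := by
  have hsub : closePairs r F ⊆ closePairs r G ∪ ({z : V × V | z.1 ∈ F \ G ∧ dist z.1 z.2 < r} ∪
      {z : V × V | z.2 ∈ F \ G ∧ dist z.1 z.2 < r}) := by
    rintro z ⟨h1, h2, h3⟩
    by_cases h4 : z.1 ∈ G
    · by_cases h5 : z.2 ∈ G
      · exact Or.inl ⟨h4, h5, h3⟩
      · exact Or.inr (Or.inr ⟨⟨h2, h5⟩, h3⟩)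
    · exact Or.inr (Or.inl ⟨⟨h1, h4⟩, h3⟩)
  refine (measure_mono hsub).trans ((measure_union_le _ _).trans ?_)
  gcongr
  refine (measure_union_le _ _).trans_eq ?_
  rw [volume_fst_mem_dist_lt r (hF.diff hG), volume_snd_mem_dist_lt r (hF.diff hG)]
  ring

/-- Among bounded sets of given volume, centred balls maximize the measure of the set of close
pairs. -/
lemma volume_closePairs_le_ball_of_subset_closedBall [Nontrivial V] (r : ℝ) {ρ R : ℝ} (hρ : 0 ≤ ρ)
    {E : Set V} (hE : MeasurableSet E) (hER : E ⊆ closedBall 0 R)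
    (hvol : volume E = volume (ball (0 : V) ρ)) :
    volume (closePairs r E) ≤ volume (closePairs r (ball (0 : V) ρ)) := by
  set B : Set V := ball 0 ρ
  have hBm : MeasurableSet B := measurableSet_ball
  have hB : volume B ≠ ⊤ := measure_ball_lt_top.ne
  let 𝒞 : Set (Set V) := {F | MeasurableSet F ∧ F ⊆ closedBall 0 R ∧ volume F = volume B ∧
    volume (closePairs r E) ≤ volume (closePairs r F)}
  have hE𝒞 : E ∈ 𝒞 := ⟨hE, hER, hvol, le_rfl⟩
  have hdiff : ∀ F ∈ 𝒞, volume (F \ B) = volume B - volume (F ∩ B) := by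
    intro F hF
    rw [← hF.2.2.1, ← sdiff_inter_self_eq_sdiff, inter_comm, measure_sdiff inter_subset_left
      (hF.1.inter hBm).nullMeasurableSet (ne_top_of_le_ne_top hB (measure_mono inter_subset_right))]
  have hdiff' : ∀ F ∈ 𝒞, volume (B \ F) = volume B - volume (F ∩ B) := by
    intro F hF
    rw [← sdiff_inter_self_eq_sdiff, measure_sdiff inter_subset_right
      (hF.1.inter hBm).nullMeasurableSet (ne_top_of_le_ne_top hB (measure_mono inter_subset_right))]
  set M := ⨆ F ∈ 𝒞, volume (F ∩ B)
  have hle : ∀ F ∈ 𝒞, volume (F ∩ B) ≤ M := fun F hF ↦ le_iSup₂ (f := fun F _ ↦ volume (F ∩ B)) F hF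
  have hM : M = volume B := by
    by_contra hne
    have hMB : M < volume B :=
      lt_of_le_of_ne (iSup₂_le fun F _ ↦ measure_mono inter_subset_right) hne
    obtain ⟨c, hc, hgain⟩ := exists_volume_bisectorReflection_mem_ge (V := V) (R := R) hρ
      (tsub_pos_of_lt hMB).ne' (ENNReal.sub_ne_top hB)
    have hstep : ∀ F ∈ 𝒞, volume (F ∩ B) + c ≤ M := by
      intro F hF
      obtain ⟨p, hp⟩ := hgain (B \ F) (F \ B) (hBm.diff hF.1) (hF.1.diff hBm) sdiff_subset
        (sdiff_subset_sdiff_left hF.2.1)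
        (hdiff' F hF ▸ tsub_le_tsub_left (hle F hF) _) (hdiff F hF ▸ tsub_le_tsub_left (hle F hF) _)
      refine le_trans ?_ (hle (polarization p F) ⟨measurableSet_polarization hF.1,
        polarization_subset_closedBall hF.2.1, (volume_polarization hF.1).trans hF.2.2.1,
        hF.2.2.2.trans (volume_closePairs_le_polarization r hF.1)⟩)
      exact le_trans (by gcongr) (volume_inter_ball_add_le_polarization hF.1 ρ)
    have hcM : c ≤ M := le_add_self.trans (hstep E hE𝒞)
    have hMc : M ≤ M - c := iSup₂_le fun F hF ↦
      ENNReal.le_sub_of_add_le_right (ne_top_of_le_ne_top hMB.ne_top hcM) (hstep F hF)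
    exact (ENNReal.sub_lt_self hMB.ne_top (ne_bot_of_le_ne_bot hc hcM) hc).not_ge hMc
  refine ENNReal.le_of_forall_pos_le_add_mul (K := 2 * volume (ball (0 : V) r))
    (ENNReal.mul_ne_top (by simp) measure_ball_lt_top.ne) fun δ hδ ↦ ?_
  rcases eq_or_ne (volume B) 0 with h0 | h0
  · refine (volume_closePairs_le_add r hE hBm).trans ?_
    gcongr
    rw [hdiff E hE𝒞, h0, zero_tsub]
    exact zero_le
  have hlt : volume B - δ < M := by rw [hM]; exact ENNReal.sub_lt_self hB h0 hδ.ne'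
  obtain ⟨F, hFδ⟩ := lt_iSup_iff.1 hlt
  obtain ⟨hF, hFδ⟩ := lt_iSup_iff.1 hFδ
  refine hF.2.2.2.trans ((volume_closePairs_le_add r hF.1 hBm).trans ?_)
  gcongr
  rw [hdiff F hF]
  exact tsub_le_iff_tsub_le.1 hFδ.le

lemma exists_volume_ball_eq [Nontrivial V] {v : ℝ≥0∞} (hv : v ≠ ⊤) :
    ∃ ρ : ℝ, 0 ≤ ρ ∧ volume (ball (0 : V) ρ) = v := by
  have hb : volume (ball (0 : V) 1) ≠ 0 := (measure_ball_pos _ _ one_pos).ne'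
  have hb' : volume (ball (0 : V) 1) ≠ ⊤ := measure_ball_lt_top.ne
  have hq : v / volume (ball (0 : V) 1) ≠ ⊤ := ENNReal.div_ne_top hv hb
  refine ⟨(v / volume (ball (0 : V) 1)).toReal ^ (Module.finrank ℝ V : ℝ)⁻¹, by positivity, ?_⟩
  rw [Measure.addHaar_ball volume 0 (by positivity),
    Real.rpow_inv_natCast_pow ENNReal.toReal_nonneg Module.finrank_pos.ne', ENNReal.ofReal_toReal hq,
    ENNReal.div_mul_cancel hb hb']

/-- Among sets of given finite volume, centred balls maximize the measure of the set of close
pairs. -/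
lemma volume_closePairs_le_ball [Nontrivial V] (r : ℝ) {ρ : ℝ} {E : Set V} (hE : MeasurableSet E)
    (hvol : volume E = volume (ball (0 : V) ρ)) :
    volume (closePairs r E) ≤ volume (closePairs r (ball (0 : V) ρ)) := by
  have hE' : volume E ≠ ⊤ := hvol ▸ measure_ball_lt_top.ne
  have hR : ∀ n : ℕ, volume (closePairs r (E ∩ closedBall 0 n)) ≤
      volume (closePairs r (ball (0 : V) ρ)) := by
    intro n
    have hn : volume (E ∩ closedBall 0 n) ≤ volume E := measure_mono inter_subset_left
    obtain ⟨ρ', hρ', hv⟩ := exists_volume_ball_eq (V := V) (ne_top_of_le_ne_top hE' hn)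
    refine (volume_closePairs_le_ball_of_subset_closedBall r hρ'
      (hE.inter measurableSet_closedBall) inter_subset_right hv.symm).trans ?_
    rcases le_total ρ' ρ with h | h
    · exact measure_mono (closePairs_mono r (ball_subset_ball h))
    · have hb : volume (ball (0 : V) ρ' \ ball 0 ρ) = 0 := by
        rw [measure_sdiff (ball_subset_ball h) measurableSet_ball.nullMeasurableSet
          measure_ball_lt_top.ne, hv, ← hvol]
        exact tsub_eq_zero_of_le hn
      simpa [hb] using volume_closePairs_le_add r (measurableSet_ball (x := (0 : V)) (ε := ρ'))
        (measurableSet_ball (x := (0 : V)) (ε := ρ))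
  have ht : Filter.Tendsto (fun n : ℕ ↦ volume (E \ (E ∩ closedBall 0 n))) Filter.atTop
      (nhds 0) := by
    have hU : ⋂ n : ℕ, E \ (E ∩ closedBall 0 n) = ∅ := by
      refine eq_empty_of_forall_notMem fun x hx ↦ ?_
      obtain ⟨n, hn⟩ := exists_nat_ge ‖x‖
      have := mem_iInter.1 hx n
      exact this.2 ⟨this.1, mem_closedBall_zero_iff.2 hn⟩
    rw [← measure_empty (μ := (volume : Measure V)), ← hU]
    refine tendsto_measure_iInter_atTop
      (fun n ↦ (hE.diff (hE.inter measurableSet_closedBall)).nullMeasurableSet) ?_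
      ⟨0, ne_top_of_le_ne_top hE' (measure_mono sdiff_subset)⟩
    intro m n hmn x hx
    refine ⟨hx.1, fun h ↦ hx.2 ⟨h.1, ?_⟩⟩
    exact closedBall_subset_closedBall (by exact_mod_cast hmn) h.2
  refine ENNReal.le_of_forall_pos_le_add_mul (K := 2 * volume (ball (0 : V) r))
    (ENNReal.mul_ne_top (by simp) measure_ball_lt_top.ne) fun δ hδ ↦ ?_
  obtain ⟨n, hn⟩ := (ht.eventually_lt_const hδ).exists
  refine (volume_closePairs_le_add r (G := E ∩ closedBall 0 n) hE
    (hE.inter measurableSet_closedBall)).trans ?_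
  exact add_le_add (hR n) (by gcongr)

end Symmetrization

section FractionalPerimeter

lemma smul_preimage_ball {V : Type*} [SeminormedAddCommGroup V] [NormedSpace ℝ V] {ρ : ℝ}
    (hρ : 0 < ρ) : (fun x : V ↦ ρ • x) ⁻¹' ball 0 ρ = ball 0 1 := by
  ext x
  simp [norm_smul, abs_of_pos hρ, hρ]

variable {V : Type*} [NormedAddCommGroup V] [InnerProductSpace ℝ V]
  [FiniteDimensional ℝ V] [MeasurableSpace V] [BorelSpace V]

lemma volume_boundaryPairs_add_closePairs (r : ℝ) {E : Set V} (hE : MeasurableSet E) :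
    volume {z : V × V | z.1 ∈ E ∧ z.2 ∈ Eᶜ ∧ dist z.1 z.2 < r} + volume (closePairs r E) =
      volume (ball (0 : V) r) * volume E := by
  rw [← volume_fst_mem_dist_lt r hE, ← measure_union _ (measurableSet_closePairs r hE)]
  · congr 1
    ext z
    simp only [closePairs, mem_union, mem_ofPred_eq, mem_compl_iff]
    tauto
  · exact disjoint_left.2 fun z hz hz' ↦ hz.2.1 hz'.2.1

/-- Among sets of given finite volume, centred balls minimize the measure of the set of close pairs
with one point inside and one point outside. -/
lemma volume_boundaryPairs_ball_le [Nontrivial V] (r : ℝ) {ρ : ℝ} {E : Set V}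
    (hE : MeasurableSet E) (hvol : volume E = volume (ball (0 : V) ρ)) :
    volume {z : V × V | z.1 ∈ ball 0 ρ ∧ z.2 ∈ (ball 0 ρ)ᶜ ∧ dist z.1 z.2 < r} ≤
      volume {z : V × V | z.1 ∈ E ∧ z.2 ∈ Eᶜ ∧ dist z.1 z.2 < r} := by
  have h1 := volume_boundaryPairs_add_closePairs r hE
  have h2 := volume_boundaryPairs_add_closePairs r (measurableSet_ball (x := (0 : V)) (ε := ρ))
  have hfin : volume (closePairs r (ball (0 : V) ρ)) ≠ ⊤ :=
    ne_top_of_le_ne_top (ENNReal.mul_ne_top measure_ball_lt_top.ne measure_ball_lt_top.ne)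
      (le_add_self.trans h2.le)
  refine (ENNReal.add_le_add_iff_right hfin).1 ?_
  rw [h2, ← hvol, ← h1]
  exact add_le_add_right (volume_closePairs_le_ball r hE hvol) _

/-- Layer cake formula for the interaction of a set with its complement. -/
lemma lintegral_lintegral_compl_rpow_neg {a : ℝ} (ha : 0 < a) (E : Set V) :
    ∫⁻ x in E, ∫⁻ y in Eᶜ, ENNReal.ofReal (‖x - y‖ ^ (-a)) =
      ∫⁻ t in Ioi (0 : ℝ),
        volume {z : V × V | z.1 ∈ E ∧ z.2 ∈ Eᶜ ∧ dist z.1 z.2 < t ^ (-a)⁻¹} := by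
  have hm : Measurable fun z : V × V ↦ ‖z.1 - z.2‖ ^ (-a) := by fun_prop
  rw [lintegral_lintegral (f := fun x y ↦ ENNReal.ofReal (‖x - y‖ ^ (-a)))
      hm.ennreal_ofReal.aemeasurable, Measure.prod_restrict, ← Measure.volume_eq_prod,
    lintegral_eq_lintegral_meas_lt _ (Filter.Eventually.of_forall fun z ↦ by positivity)
      hm.aemeasurable]
  refine setLIntegral_congr_fun measurableSet_Ioi fun t ht ↦ ?_
  rw [Measure.restrict_apply (measurableSet_lt measurable_const hm)]
  congr 1
  ext z
  simp only [mem_inter_iff, mem_ofPred_eq, mem_prod]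
  rw [and_comm, and_assoc]
  refine and_congr_right fun h1 ↦ and_congr_right fun h2 ↦ ?_
  have hz : 0 < ‖z.1 - z.2‖ := norm_pos_iff.2 (sub_ne_zero.2 fun h ↦ h2 (h ▸ h1))
  rw [dist_eq_norm, Real.lt_rpow_inv_iff_of_neg hz ht (neg_neg_of_pos ha)]

lemma fracPerimeter_ball_le {N : ℕ} (hN : 0 < N) {s : ℝ} (hs : 0 < s) {ρ : ℝ}
    {E : Set (EuclideanSpace ℝ (Fin N))} (hE : MeasurableSet E)
    (hvol : volume E = volume (ball (0 : EuclideanSpace ℝ (Fin N)) ρ)) :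
    fracPerimeter N s (ball 0 ρ) ≤ fracPerimeter N s E := by
  have : Nonempty (Fin N) := ⟨⟨0, hN⟩⟩
  have ha : 0 < (N : ℝ) + 2 * s := by positivity
  rw [fracPerimeter, fracPerimeter, lintegral_lintegral_compl_rpow_neg ha,
    lintegral_lintegral_compl_rpow_neg ha]
  exact lintegral_mono fun t ↦ volume_boundaryPairs_ball_le _ hE hvol

lemma setLIntegral_smul_preimage {ρ : ℝ} (hρ : 0 < ρ) (S : Set V) (f : V → ℝ≥0∞) :
    ∫⁻ x in S, f x = ENNReal.ofReal (ρ ^ Module.finrank ℝ V) *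
      ∫⁻ x in (fun x ↦ ρ • x) ⁻¹' S, f (ρ • x) := by
  have h := Measure.map_addHaar_smul (volume : Measure V) hρ.ne'
  have he : MeasurableEmbedding fun x : V ↦ ρ • x := measurableEmbedding_const_smul₀ hρ.ne'
  rw [← he.lintegral_map (μ := volume.restrict ((fun x ↦ ρ • x) ⁻¹' S)) f,
    ← he.restrict_map, h, Measure.restrict_smul, lintegral_smul_measure, smul_eq_mul, ← mul_assoc,
    ← ENNReal.ofReal_mul (by positivity), abs_of_pos (by positivity), mul_inv_cancel₀
    (by positivity), ENNReal.ofReal_one, one_mul]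

lemma fracPerimeter_ball {N : ℕ} (s : ℝ) {ρ : ℝ} (hρ : 0 < ρ) :
    fracPerimeter N s (ball 0 ρ) =
      ENNReal.ofReal (ρ ^ ((N : ℝ) - 2 * s)) * fracPerimeter N s (ball 0 1) := by
  have hk : ∀ x y : EuclideanSpace ℝ (Fin N),
      ENNReal.ofReal (‖ρ • x - ρ • y‖ ^ (-((N : ℝ) + 2 * s))) =
        ENNReal.ofReal (ρ ^ (-((N : ℝ) + 2 * s))) *
          ENNReal.ofReal (‖x - y‖ ^ (-((N : ℝ) + 2 * s))) := by
    intro x y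
    rw [← smul_sub, norm_smul, Real.norm_of_nonneg hρ.le, Real.mul_rpow hρ.le (norm_nonneg _),
      ENNReal.ofReal_mul (by positivity)]
  have hpow : ρ ^ ((N : ℝ) - 2 * s) = ρ ^ N * ρ ^ N * ρ ^ (-((N : ℝ) + 2 * s)) := by
    rw [← Real.rpow_natCast, ← Real.rpow_add hρ, ← Real.rpow_add hρ]
    ring_nf
  unfold fracPerimeter
  rw [setLIntegral_smul_preimage hρ, smul_preimage_ball hρ]
  simp_rw [setLIntegral_smul_preimage hρ (ball (0 : EuclideanSpace ℝ (Fin N)) ρ)ᶜ, preimage_compl,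
    smul_preimage_ball hρ, hk, lintegral_const_mul' _ _ ENNReal.ofReal_ne_top]
  rw [finrank_euclideanSpace_fin, hpow, ENNReal.ofReal_mul (by positivity),
    ENNReal.ofReal_mul (by positivity)]
  ring

end FractionalPerimeter

/-- fractional isoperimetric inequality: for every measurable `E ⊂ ℝ^N` of
finite positive volume and `s ∈ (0,1/2)`,
`P_s(E) ≥ P_s(B_1) |B_1|^{-(N-2s)/N} |E|^{(N-2s)/N}`; i.e. among sets of given volume,
balls minimize the fractional `s`-perimeter. -/
theorem fractional_isoperimetric_inequality
    (N : ℕ) (hN : 0 < N) (s : ℝ) (hs : 0 < s) (hs' : s < 1/2)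
    (E : Set (EuclideanSpace ℝ (Fin N))) (hE : MeasurableSet E)
    (hvol : 0 < volume E) (hvol' : volume E < ⊤) :
    fracPerimeter N s (Metric.ball (0 : EuclideanSpace ℝ (Fin N)) 1) *
        (volume (Metric.ball (0 : EuclideanSpace ℝ (Fin N)) 1)) ^
          (-(((N : ℝ) - 2*s) / N)) *
        (volume E) ^ (((N : ℝ) - 2*s) / N) ≤
      fracPerimeter N s E := by
  have : Nonempty (Fin N) := ⟨⟨0, hN⟩⟩
  obtain ⟨ρ, hρ, hv⟩ := exists_volume_ball_eq (V := EuclideanSpace ℝ (Fin N)) hvol'.ne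
  have hρ' : 0 < ρ := hρ.lt_of_ne fun h ↦ by simp [← hv, ← h] at hvol
  have hb : volume (ball (0 : EuclideanSpace ℝ (Fin N)) 1) ≠ 0 :=
    (measure_ball_pos _ _ one_pos).ne'
  have hb' : volume (ball (0 : EuclideanSpace ℝ (Fin N)) 1) ≠ ⊤ := measure_ball_lt_top.ne
  have hα : 0 ≤ ((N : ℝ) - 2 * s) / N := by
    have : (1 : ℝ) ≤ N := by exact_mod_cast hN
    exact div_nonneg (by linarith) (by linarith)
  refine le_of_eq_of_le ?_ (fracPerimeter_ball_le hN hs hE hv.symm)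
  have hpow : (volume E) ^ (((N : ℝ) - 2 * s) / N) = ENNReal.ofReal (ρ ^ ((N : ℝ) - 2 * s)) *
      volume (ball (0 : EuclideanSpace ℝ (Fin N)) 1) ^ (((N : ℝ) - 2 * s) / N) := by
    rw [← hv, Measure.addHaar_ball volume 0 hρ, finrank_euclideanSpace_fin,
      ENNReal.mul_rpow_of_nonneg _ _ hα, ENNReal.ofReal_rpow_of_nonneg (by positivity) hα,
      ← Real.rpow_natCast, ← Real.rpow_mul hρ, mul_div_cancel₀ _ (by positivity)]
  rw [fracPerimeter_ball s hρ', hpow, mul_assoc, mul_left_comm (_ ^ (-_)),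
    ← ENNReal.rpow_add _ _ hb hb', neg_add_cancel, ENNReal.rpow_zero, mul_one, mul_comm]
end
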